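/- Let f=(h₀,h₁,h₂;q₀,q₁,q₂) be a minimal canonical admissible 6-tuple. Then f is a root if and only if neither of the following holds (negated q-entries and the expressions involving (h₀+h₂)/2 being taken as least nonnegative residues mod the appropriate 2lᵢ): (a) h₀=h₁, h₀<q₂<h₂, q₂≠−q₀, q₂≠(h₀+h₂)/2, and, in case q₁=0, q₂≠(h₀+h₂)/2−q₀; (b) h₀=h₁, h₀<q₀<h₂, q₀≠−q₂, q₀≠(h₀+h₂)/2, and, in case q₁=0, q₀≠(h₀+h₂)/2−q₂. -/

import Mathlib

/-!
Common setup: 6-tuples, the coloured graph Γ(f), conditions (I)–(VI),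
the maps ψ₁, ψ₂, ψ₃, σ, equivalences, traps, canonical/minimal/root tuples.
-/

namespace GMN

/-- A 6-tuple `(h₀,h₁,h₂;q₀,q₁,q₂)` of integers. -/
structure Tuple where
  h0 : ℤ
  h1 : ℤ
  h2 : ℤ
  q0 : ℤ
  q1 : ℤ
  q2 : ℤ

namespace Tuple

/-- The `h`-components indexed by `ℤ₃`. -/
def h (f : Tuple) : ZMod 3 → ℤ := fun i => if i = 0 then f.h0 else if i = 1 then f.h1 else f.h2

/-- The `q`-components indexed by `ℤ₃`. -/
def q (f : Tuple) : ZMod 3 → ℤ := fun i => if i = 0 then f.q0 else if i = 1 then f.q1 else f.q2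

/-- `2lᵢ = h_{i-1} + hᵢ`. -/
def twol (f : Tuple) (i : ZMod 3) : ℤ := f.h (i - 1) + f.h i

end Tuple

/-- Condition (I): all `hᵢ` positive. -/
def CondI (f : Tuple) : Prop := ∀ i, 0 < f.h i

/-- Condition (II): all `hᵢ` of the same parity. -/
def CondII (f : Tuple) : Prop := ∀ i j, f.h i % 2 = f.h j % 2

/-- Condition (III): `0 ≤ qᵢ < 2lᵢ`. -/
def CondIII (f : Tuple) : Prop := ∀ i, 0 ≤ f.q i ∧ f.q i < f.twol i

/-- Condition (IV): all `qᵢ` of the same parity. -/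
def CondIV (f : Tuple) : Prop := ∀ i j, f.q i % 2 = f.q j % 2

/-- Conditions (I)–(IV) together. -/
def CondsI_IV (f : Tuple) : Prop := CondI f ∧ CondII f ∧ CondIII f ∧ CondIV f

/-- Condition (V): `hᵢ + qᵢ` odd. -/
def CondV (f : Tuple) : Prop := ∀ i, (f.h i + f.q i) % 2 = 1

/-- The vertex set `V(f) = ⋃ᵢ {i} × ℤ_{2lᵢ}`, with second coordinates as least
nonnegative residues. -/
def Vtx (f : Tuple) : Set (ZMod 3 × ℤ) := {p | 0 ≤ p.2 ∧ p.2 < f.twol p.1}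

/-- `ι₀(i,j) = (i, j + (−1)^j)`, second coordinate mod `2lᵢ`. -/
def iota0 (f : Tuple) (p : ZMod 3 × ℤ) : ZMod 3 × ℤ :=
  (p.1, (if p.2 % 2 = 0 then p.2 + 1 else p.2 - 1) % f.twol p.1)

/-- `ι₁(i,j) = (i, j − (−1)^j)`, second coordinate mod `2lᵢ`. -/
def iota1 (f : Tuple) (p : ZMod 3 × ℤ) : ZMod 3 × ℤ :=
  (p.1, (if p.2 % 2 = 0 then p.2 - 1 else p.2 + 1) % f.twol p.1)

/-- `ι₂(i,j) = (i+1, −j−1)` if `0 ≤ j ≤ hᵢ−1`, and `(i−1, 2lᵢ−j−1)` if `hᵢ ≤ j ≤ 2lᵢ−1`. -/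
def iota2 (f : Tuple) (p : ZMod 3 × ℤ) : ZMod 3 × ℤ :=
  if p.2 < f.h p.1 then (p.1 + 1, (-p.2 - 1) % f.twol (p.1 + 1))
  else (p.1 - 1, (f.twol p.1 - p.2 - 1) % f.twol (p.1 - 1))

/-- `ρ(i,j) = (i, j + qᵢ)`. -/
def rho (f : Tuple) (p : ZMod 3 × ℤ) : ZMod 3 × ℤ :=
  (p.1, (p.2 + f.q p.1) % f.twol p.1)

/-- `ρ⁻¹(i,j) = (i, j − qᵢ)`. -/
def rhoInv (f : Tuple) (p : ZMod 3 × ℤ) : ZMod 3 × ℤ :=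
  (p.1, (p.2 - f.q p.1) % f.twol p.1)

/-- `ι₃ = ρ ∘ ι₂ ∘ ρ⁻¹`. -/
def iota3 (f : Tuple) : ZMod 3 × ℤ → ZMod 3 × ℤ :=
  rho f ∘ iota2 f ∘ rhoInv f

/-- The four involutions of `Γ(f)`, indexed by the colour `c ∈ {0,1,2,3}`. -/
def iota (f : Tuple) : Fin 4 → ZMod 3 × ℤ → ZMod 3 × ℤ
  | 0 => iota0 f
  | 1 => iota1 f
  | 2 => iota2 f
  | 3 => iota3 f

/-- One step along an edge of `Γ(f)` whose colour lies in `S`, within `V(f)`. -/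
def Step (f : Tuple) (S : Set (Fin 4)) (a b : ZMod 3 × ℤ) : Prop :=
  a ∈ Vtx f ∧ b ∈ Vtx f ∧ ∃ c ∈ S, b = iota f c a

/-- The orbit relation on `V(f)` of the subgroup generated by the involutions with
colours in `S` (the `S`-residue relation). -/
def OrbRel (f : Tuple) (S : Set (Fin 4)) : ZMod 3 × ℤ → ZMod 3 × ℤ → Prop :=
  Relation.EqvGen (Step f S)

/-- The subgroup generated by the colours in `S` has exactly three orbits on `V(f)`. -/
def ThreeOrbits (f : Tuple) (S : Set (Fin 4)) : Prop :=
  ∃ a b c, a ∈ Vtx f ∧ b ∈ Vtx f ∧ c ∈ Vtx f ∧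
    ¬ OrbRel f S a b ∧ ¬ OrbRel f S a c ∧ ¬ OrbRel f S b c ∧
    ∀ v ∈ Vtx f, OrbRel f S a v ∨ OrbRel f S b v ∨ OrbRel f S c v

/-- Admissibility: conditions (I)–(IV), (V), and (VI) (three `{2,3}`-residues). -/
def Admissible (f : Tuple) : Prop :=
  CondsI_IV f ∧ CondV f ∧ ThreeOrbits f {2, 3}

/-- `ψ₁(h₀,h₁,h₂;q₀,q₁,q₂) = (h₁,h₂,h₀;q₁,q₂,q₀)`. -/
def psi1 (f : Tuple) : Tuple := ⟨f.h1, f.h2, f.h0, f.q1, f.q2, f.q0⟩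

/-- `ψ₂(h₀,h₁,h₂;q₀,q₁,q₂) = (h₂,h₁,h₀;q₀,q₂,q₁)`. -/
def psi2 (f : Tuple) : Tuple := ⟨f.h2, f.h1, f.h0, f.q0, f.q2, f.q1⟩

/-- `ψ₃(h₀,h₁,h₂;q₀,q₁,q₂) = (h₀,h₁,h₂;−q₀,−q₁,−q₂)`, the `q`-entries reduced to their
least nonnegative residues mod the respective `2lᵢ`. -/
def psi3 (f : Tuple) : Tuple :=
  ⟨f.h0, f.h1, f.h2,
    (-f.q0) % (f.h2 + f.h0), (-f.q1) % (f.h0 + f.h1), (-f.q2) % (f.h1 + f.h2)⟩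

/-- The 2-symmetric transformation `σ`, with the `q′`-entries reduced to their least
nonnegative residues mod the respective `2lᵢ′ = h′_{i−1} + h′ᵢ`. -/
def sigma (f : Tuple) : Tuple :=
  if f.q0 = 0 then f
  else if f.q0 < f.h0 ∧ f.q0 < f.h2 then
    ⟨f.h0 + f.h1 - f.q0, f.q0, f.h2 + f.h1 - f.q0,
      (f.h0 + f.h1 + f.h2 - 2 * f.q0) % ((f.h2 + f.h1 - f.q0) + (f.h0 + f.h1 - f.q0)),
      (f.q0 + f.q1 + f.h1) % ((f.h0 + f.h1 - f.q0) + f.q0),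
      (f.q0 + f.q2 + f.h1) % (f.q0 + (f.h2 + f.h1 - f.q0))⟩
  else if f.h0 < f.q0 ∧ f.h2 < f.q0 then
    ⟨f.q0 + f.h1 - f.h2, f.h0 + f.h2 - f.q0, f.q0 + f.h1 - f.h0,
      f.h1 % ((f.q0 + f.h1 - f.h0) + (f.q0 + f.h1 - f.h2)),
      (f.q0 + f.q1 - f.h2) % ((f.q0 + f.h1 - f.h2) + (f.h0 + f.h2 - f.q0)),
      (f.q0 + f.q2 - f.h0) % ((f.h0 + f.h2 - f.q0) + (f.q0 + f.h1 - f.h0))⟩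
  else if f.q0 < f.h2 then
    ⟨f.h1, f.h0, f.h1 + f.h2 - f.h0,
      (f.h1 + f.h2 - f.q0) % ((f.h1 + f.h2 - f.h0) + f.h1),
      f.q1 % (f.h1 + f.h0),
      (2 * f.q0 + f.q2 + f.h1 - f.h0) % (f.h0 + (f.h1 + f.h2 - f.h0))⟩
  else
    ⟨f.h1 + f.h0 - f.h2, f.h2, f.h1,
      (f.h1 + f.h0 - f.q0) % (f.h1 + (f.h1 + f.h0 - f.h2)),
      (2 * f.q0 + f.q1 + f.h1 - f.h2) % ((f.h1 + f.h0 - f.h2) + f.h2),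
      f.q2 % (f.h2 + f.h1)⟩

/-- The complexity `ν(f) = h₀ + h₁ + h₂`. -/
def nu (f : Tuple) : ℤ := f.h0 + f.h1 + f.h2

/-- `δ(f) = ν(σ(f)) − ν(f)`. -/
def delta (f : Tuple) : ℤ := nu (sigma f) - nu f

/-- One step of the action of a generator of `H` on admissible 6-tuples. -/
def HStep (a b : Tuple) : Prop :=
  Admissible a ∧ Admissible b ∧ (b = psi1 a ∨ b = psi2 a ∨ b = psi3 a)

/-- `H`-equivalence: the orbit relation of `H = ⟨ψ₁,ψ₂,ψ₃⟩` on `ℱ`. -/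
def HEquiv : Tuple → Tuple → Prop := Relation.EqvGen HStep

/-- One step of the action of a generator of `H′` on admissible 6-tuples. -/
def H'Step (a b : Tuple) : Prop :=
  Admissible a ∧ Admissible b ∧ (b = psi2 a ∨ b = psi3 a)

/-- `H′`-equivalence: the orbit relation of `H′ = ⟨ψ₂,ψ₃⟩` on `ℱ`. -/
def H'Equiv : Tuple → Tuple → Prop := Relation.EqvGen H'Step

/-- One step of the action of a generator of `G` on admissible 6-tuples. -/
def GStep (a b : Tuple) : Prop :=
  Admissible a ∧ Admissible b ∧ (b = psi1 a ∨ b = psi2 a ∨ b = psi3 a ∨ b = sigma a)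

/-- `G`-equivalence: the orbit relation of `G = ⟨ψ₁,ψ₂,ψ₃,σ⟩` on `ℱ`. -/
def GEquiv : Tuple → Tuple → Prop := Relation.EqvGen GStep

/-- Membership in the set `{0, r+1, r+2, …, s−1}`. -/
def inT (r s x : ℤ) : Prop := x = 0 ∨ (r < x ∧ x < s)

/-- A trap of type `(r,s)`: `H`-equivalent to an admissible `(r,r,s;q₀,0,q₂)` with
`q₀+k(q₀+q₂), q₂+k(q₀+q₂) ∈ {0,r+1,…,s−1} (mod r+s)` for all `k ≥ 0`. -/
def IsTrapOfType (r s : ℤ) (f : Tuple) : Prop :=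
  ∃ g : Tuple, Admissible g ∧ HEquiv f g ∧
    g.h0 = r ∧ g.h1 = r ∧ g.h2 = s ∧ g.q1 = 0 ∧
    ∀ k : ℕ, inT r s ((g.q0 + (k : ℤ) * (g.q0 + g.q2)) % (r + s)) ∧
             inT r s ((g.q2 + (k : ℤ) * (g.q0 + g.q2)) % (r + s))

/-- A trap: a trap of some type `(r,s)` with `0 < r ≤ s`. -/
def IsTrap (f : Tuple) : Prop := ∃ r s : ℤ, 0 < r ∧ r ≤ s ∧ IsTrapOfType r s f

/-- The canonical representative conditions (a)–(i) (together with admissibility). -/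
def Canonical (f : Tuple) : Prop :=
  Admissible f ∧
  (f.h0 ≤ f.h1 ∧ f.h1 ≤ f.h2) ∧
  (2 * f.q0 ≤ f.h2 + f.h0) ∧
  ((f.q0 = 0 ∨ 2 * f.q0 = f.h2 + f.h0) → 2 * f.q1 ≤ f.h0 + f.h1) ∧
  ((f.q0 = 0 ∨ 2 * f.q0 = f.h2 + f.h0) → (f.q1 = 0 ∨ 2 * f.q1 = f.h0 + f.h1) →
    2 * f.q2 ≤ f.h1 + f.h2) ∧
  (f.h0 = f.h1 → f.q0 ≤ f.q2 ∧ f.q2 ≤ (-f.q0) % (f.h2 + f.h0)) ∧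
  (f.h0 = f.h1 → (f.q2 = f.q0 ∨ f.q2 = (-f.q0) % (f.h2 + f.h0)) → f.q1 ≤ f.h1) ∧
  (f.h1 = f.h2 → f.q0 ≤ f.q1 ∧ f.q1 ≤ (-f.q0) % (f.h2 + f.h0)) ∧
  (f.h1 = f.h2 → (f.q1 = f.q0 ∨ f.q1 = (-f.q0) % (f.h2 + f.h0)) → f.q2 ≤ f.h2) ∧
  (f.h0 = f.h1 ∧ f.h1 = f.h2 → f.q1 ≤ f.q2)

/-- A canonical 6-tuple is minimal if its complexity is minimal in its `G`-orbit. -/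
def Minimal (f : Tuple) : Prop :=
  Canonical f ∧ ∀ g, GEquiv f g → nu f ≤ nu g

/-- A canonical 6-tuple is a root if every `G`-equivalent but not `H`-equivalent
6-tuple has strictly larger complexity. -/
def Root (f : Tuple) : Prop :=
  Canonical f ∧ ∀ g, GEquiv f g → ¬ HEquiv f g → nu f < nu g

/-- A colour-preserving isomorphism between `Γ(f)` and `Γ(f′)`. -/
def CPIso (f f' : Tuple) : Prop :=
  ∃ φ : ZMod 3 × ℤ → ZMod 3 × ℤ, Set.BijOn φ (Vtx f) (Vtx f') ∧
    ∀ c : Fin 4, ∀ v ∈ Vtx f, φ (iota f c v) = iota f' c (φ v)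

/-- The set of admissible 6-tuples, as a type. -/
abbrev AdmTuple := {f : Tuple // Admissible f}

/-!
Outside `q₀ = 0`, where it is the identity, `σ` is given by four linear formulas, each of which
commutes with shifts of `q₁` and `q₂` by periods. So up to such shifts its compatibility with
`ψ₂` and `ψ₃` and the identity `σ ∘ σ = id` are identities between linear maps.

A move of `σ` that lowers the complexity starts at a tuple with `h₁ < h₀, h₂`. By symmetry, a move
that raises it ends at such a tuple, and then both proper rotations of that tuple have `h₁ > h₀`
or `h₁ > h₂`, so `σ` lowers the complexity again only by undoing that move. Hence, if `f` has
least complexity in its `G`-class and the level moves, those that preserve the complexity, stay in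
its `H`-class, then every tuple of the `G`-class is reached from `f` by elements of `H` and
complexity-raising moves, and `f` is a root.

Up to `ψ₂` the level moves are `(r,r,s;q₀,q₁,q₂) ↦ (r,r,s;r+s-q₀,q₁,2q₀+q₂)` with `r < q₀ < s`,
and comparing the right-hand side with the few tuples of the same shape in the `H`-class of the
left-hand side gives the two exceptional cases. A level move preserves the number of
`{2,3}`-orbits because each vertex of circle 0 can be pushed along its edge of colour 2 to circle
1 or 2, and the resulting identifications agree for both tuples after a relabelling.
-/

/-- Conditions (I)–(V): admissibility without the count (VI) of `{2,3}`-orbits. -/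
def CondsI_V (f : Tuple) : Prop := CondsI_IV f ∧ CondV f

theorem Admissible.condsI_V {f : Tuple} (hf : Admissible f) : CondsI_V f := ⟨hf.1, hf.2.1⟩

theorem forall_zmod_three {P : ZMod 3 → Prop} : (∀ i, P i) ↔ P 0 ∧ P 1 ∧ P 2 :=
  ⟨fun h => ⟨h 0, h 1, h 2⟩, fun ⟨h0, h1, h2⟩ i => by fin_cases i <;> assumption⟩

section Components

variable (f : Tuple)

theorem h_zero : f.h 0 = f.h0 := rfl
theorem h_one : f.h 1 = f.h1 := rfl
theorem h_two : f.h 2 = f.h2 := rfl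
theorem q_zero : f.q 0 = f.q0 := rfl
theorem q_one : f.q 1 = f.q1 := rfl
theorem q_two : f.q 2 = f.q2 := rfl
theorem twol_zero : f.twol 0 = f.h2 + f.h0 := rfl
theorem twol_one : f.twol 1 = f.h0 + f.h1 := rfl
theorem twol_two : f.twol 2 = f.h1 + f.h2 := rfl

end Components

attribute [ext] Tuple

theorem condsI_V_iff {f : Tuple} : CondsI_V f ↔
    (0 < f.h0 ∧ 0 < f.h1 ∧ 0 < f.h2) ∧ (f.h0 % 2 = f.h1 % 2 ∧ f.h1 % 2 = f.h2 % 2) ∧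
    ((f.h0 + f.q0) % 2 = 1 ∧ (f.h1 + f.q1) % 2 = 1 ∧ (f.h2 + f.q2) % 2 = 1) ∧
    (0 ≤ f.q0 ∧ f.q0 < f.h2 + f.h0) ∧ (0 ≤ f.q1 ∧ f.q1 < f.h0 + f.h1) ∧
    (0 ≤ f.q2 ∧ f.q2 < f.h1 + f.h2) := by
  simp only [CondsI_V, CondsI_IV, CondI, CondII, CondIII, CondIV, CondV, forall_zmod_three,
    h_zero, h_one, h_two, q_zero, q_one, q_two, twol_zero, twol_one, twol_two]
  constructor
  · rintro ⟨⟨hpos, hpar, hq, -⟩, hodd⟩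
    exact ⟨hpos, by omega, hodd, hq⟩
  · rintro ⟨hpos, hpar, hodd, hq⟩
    refine ⟨⟨hpos, by simp only [hpar, and_self], hq, ?_⟩, hodd⟩
    have par : ∀ a b c d : ℤ, a % 2 = b % 2 → (a + c) % 2 = 1 → (b + d) % 2 = 1 →
        c % 2 = d % 2 := fun a b c d _ _ _ => by
      rcases Int.emod_two_eq c with _ | _ <;> omega
    have h01 := par _ _ _ _ hpar.1 hodd.1 hodd.2.1
    have h12 := par _ _ _ _ hpar.2 hodd.2.1 hodd.2.2
    simp only [h01, h12, and_self]

/-! ### Reduction of the `q`-entries and the linear branches of `σ` -/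

/-- The tuple with each `qᵢ` replaced by its least nonnegative residue mod `2lᵢ`. -/
def reduce (f : Tuple) : Tuple :=
  ⟨f.h0, f.h1, f.h2, f.q0 % (f.h2 + f.h0), f.q1 % (f.h0 + f.h1), f.q2 % (f.h1 + f.h2)⟩

/-- The tuple with `q₁`, `q₂` moved by `k`, `l` periods. The entry `q₀` stays as it is because
it decides which branch of `σ` applies. -/
def shift (f : Tuple) (k l : ℤ) : Tuple :=
  { f with q1 := f.q1 + (f.h0 + f.h1) * k, q2 := f.q2 + (f.h1 + f.h2) * l }

theorem reduce_eq_self {f : Tuple} (hf : CondsI_V f) : reduce f = f := by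
  obtain ⟨-, -, -, h0, h1, h2⟩ := condsI_V_iff.1 hf
  ext
  exacts [rfl, rfl, rfl, Int.emod_eq_of_lt h0.1 h0.2, Int.emod_eq_of_lt h1.1 h1.2,
    Int.emod_eq_of_lt h2.1 h2.2]

theorem reduce_shift (f : Tuple) (k l : ℤ) : reduce (shift f k l) = reduce f := by
  simp only [reduce, shift, Int.add_mul_emod_self_left]

theorem exists_reduce_eq_shift {f : Tuple} (h0 : 0 ≤ f.q0) (h : f.q0 < f.h2 + f.h0) :
    ∃ k l, reduce f = shift f k l := by
  refine ⟨-(f.q1 / (f.h0 + f.h1)), -(f.q2 / (f.h1 + f.h2)), ?_⟩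
  simp only [reduce, shift, Int.emod_eq_of_lt h0 h, Int.emod_def f.q1, Int.emod_def f.q2,
    mul_neg, sub_eq_add_neg]

theorem condsI_V_reduce {f : Tuple} (hpos : 0 < f.h0 ∧ 0 < f.h1 ∧ 0 < f.h2)
    (hpar : f.h0 % 2 = f.h1 % 2 ∧ f.h1 % 2 = f.h2 % 2)
    (hodd : (f.h0 + f.q0) % 2 = 1 ∧ (f.h1 + f.q1) % 2 = 1 ∧ (f.h2 + f.q2) % 2 = 1) :
    CondsI_V (reduce f) := by
  have residue : ∀ x m : ℤ, 0 < m → 2 ∣ m → (0 ≤ x % m ∧ x % m < m) ∧ x % m % 2 = x % 2 :=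
    fun x m hm h2 => ⟨⟨Int.emod_nonneg _ hm.ne', Int.emod_lt_of_pos _ hm⟩,
      Int.emod_emod_of_dvd _ h2⟩
  obtain ⟨hr0, hp0⟩ := residue f.q0 (f.h2 + f.h0) (by omega) (by omega)
  obtain ⟨hr1, hp1⟩ := residue f.q1 (f.h0 + f.h1) (by omega) (by omega)
  obtain ⟨hr2, hp2⟩ := residue f.q2 (f.h1 + f.h2) (by omega) (by omega)
  refine condsI_V_iff.2 ⟨hpos, hpar, ?_, hr0, hr1, hr2⟩
  simp only [reduce]
  omega

theorem psi2_reduce (f : Tuple) : psi2 (reduce f) = reduce (psi2 f) := by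
  simp only [psi2, reduce, add_comm]

/-- An unreduced representative of `ψ₃`, chosen so that `q₀` stays in `[0, 2l₀)` when
`0 < q₀ < 2l₀`. -/
def flip (f : Tuple) : Tuple := ⟨f.h0, f.h1, f.h2, f.h2 + f.h0 - f.q0, -f.q1, -f.q2⟩

theorem psi3_eq_reduce_flip (f : Tuple) : psi3 f = reduce (flip f) := by
  simp only [psi3, reduce, flip, sub_eq_add_neg, Int.add_emod_left]

theorem flip_shift (f : Tuple) (k l : ℤ) : flip (shift f k l) = shift (flip f) (-k) (-l) := by
  ext <;> simp only [flip, shift] <;> ring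

theorem CondsI_V.psi1 {f : Tuple} (hf : CondsI_V f) : CondsI_V (psi1 f) := by
  rw [condsI_V_iff] at *
  simp only [GMN.psi1]
  omega

theorem CondsI_V.psi2 {f : Tuple} (hf : CondsI_V f) : CondsI_V (psi2 f) := by
  rw [condsI_V_iff] at *
  simp only [GMN.psi2]
  omega

theorem CondsI_V.psi3 {f : Tuple} (hf : CondsI_V f) : CondsI_V (psi3 f) := by
  have := condsI_V_iff.1 hf
  rw [psi3_eq_reduce_flip]
  apply condsI_V_reduce <;> simp only [flip] <;> omega

theorem psi2_psi2 (f : Tuple) : psi2 (psi2 f) = f := rfl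

theorem psi3_psi3 {f : Tuple} (hf : CondsI_V f) : psi3 (psi3 f) = f := by
  have neg_residue : ∀ x m : ℤ, -(-x % m) % m = x % m := fun x m => by
    rw [Int.emod_def (-x) m, neg_sub, sub_neg_eq_add, add_comm, Int.add_mul_emod_self_left]
  calc psi3 (psi3 f) = reduce f := by ext <;> simp only [psi3, reduce, neg_residue]
    _ = f := reduce_eq_self hf

theorem psi3_psi2 (f : Tuple) : psi3 (psi2 f) = psi2 (psi3 f) := by
  simp only [psi2, psi3, add_comm]

/-- The formula for `σ` when `q₀ < h₀, h₂`, with the `q`-entries not yet reduced. -/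
def sigmaSmall (f : Tuple) : Tuple :=
  ⟨f.h0 + f.h1 - f.q0, f.q0, f.h2 + f.h1 - f.q0, f.h0 + f.h1 + f.h2 - 2 * f.q0,
    f.q0 + f.q1 + f.h1, f.q0 + f.q2 + f.h1⟩

/-- The formula for `σ` when `h₀, h₂ < q₀`, with the `q`-entries not yet reduced. -/
def sigmaLarge (f : Tuple) : Tuple :=
  ⟨f.q0 + f.h1 - f.h2, f.h0 + f.h2 - f.q0, f.q0 + f.h1 - f.h0, f.h1,
    f.q0 + f.q1 - f.h2, f.q0 + f.q2 - f.h0⟩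

/-- The formula for `σ` when `h₀ < q₀ < h₂`, with the `q`-entries not yet reduced. -/
def sigmaLeft (f : Tuple) : Tuple :=
  ⟨f.h1, f.h0, f.h1 + f.h2 - f.h0, f.h1 + f.h2 - f.q0, f.q1, 2 * f.q0 + f.q2 + f.h1 - f.h0⟩

/-- The formula for `σ` when `h₂ < q₀ < h₀`, with the `q`-entries not yet reduced. -/
def sigmaRight (f : Tuple) : Tuple :=
  ⟨f.h1 + f.h0 - f.h2, f.h2, f.h1, f.h1 + f.h0 - f.q0, 2 * f.q0 + f.q1 + f.h1 - f.h2, f.q2⟩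

/-- `SigmaBranch T f` says that `T` is the linear formula that defines `σ` at `f`, up to the
reduction of the `q`-entries. -/
inductive SigmaBranch : (Tuple → Tuple) → Tuple → Prop
  | small {f : Tuple} (pos : 0 < f.q0) (lt0 : f.q0 < f.h0) (lt2 : f.q0 < f.h2) :
      SigmaBranch sigmaSmall f
  | large {f : Tuple} (pos : 0 < f.q0) (gt0 : f.h0 < f.q0) (gt2 : f.h2 < f.q0) :
      SigmaBranch sigmaLarge f
  | left {f : Tuple} (pos : 0 < f.q0) (gt0 : f.h0 < f.q0) (lt2 : f.q0 < f.h2) :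
      SigmaBranch sigmaLeft f
  | right {f : Tuple} (pos : 0 < f.q0) (lt0 : f.q0 < f.h0) (gt2 : f.h2 < f.q0) :
      SigmaBranch sigmaRight f

theorem CondsI_V.exists_sigmaBranch {f : Tuple} (hf : CondsI_V f) (h : f.q0 ≠ 0) :
    ∃ T, SigmaBranch T f := by
  rw [condsI_V_iff] at hf
  have pos : 0 < f.q0 := by omega
  rcases lt_or_gt_of_ne (show f.q0 ≠ f.h0 by omega) with h0 | h0 <;>
    rcases lt_or_gt_of_ne (show f.q0 ≠ f.h2 by omega) with h2 | h2
  exacts [⟨_, .small pos h0 h2⟩, ⟨_, .right pos h0 h2⟩, ⟨_, .left pos h0 h2⟩,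
    ⟨_, .large pos h0 h2⟩]

theorem sigma_of_q0_eq_zero {f : Tuple} (h : f.q0 = 0) : sigma f = f := if_pos h

namespace SigmaBranch

variable {T : Tuple → Tuple} {f : Tuple}

theorem q0_pos (h : SigmaBranch T f) : 0 < f.q0 := by cases h <;> assumption

theorem sigma_eq (h : SigmaBranch T f) : sigma f = reduce (T f) := by
  rw [sigma, if_neg h.q0_pos.ne']
  cases h with
  | small _ lt0 lt2 => exact if_pos ⟨lt0, lt2⟩
  | large _ gt0 gt2 => rw [if_neg (by omega)]; exact if_pos ⟨gt0, gt2⟩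
  | left _ gt0 lt2 => rw [if_neg (by omega), if_neg (by omega)]; exact if_pos lt2
  | right _ lt0 gt2 => rw [if_neg (by omega), if_neg (by omega)]; exact if_neg gt2.not_gt

theorem q0_lt (h : SigmaBranch T f) (hf : CondsI_V f) : (T f).q0 < (T f).h2 + (T f).h0 := by
  have := condsI_V_iff.1 hf
  cases h <;> simp only [sigmaSmall, sigmaLarge, sigmaLeft, sigmaRight] <;> omega

theorem condsI_V_reduce (h : SigmaBranch T f) (hf : CondsI_V f) : CondsI_V (reduce (T f)) := by
  have := condsI_V_iff.1 hf
  cases h <;> apply GMN.condsI_V_reduce <;>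
    simp only [sigmaSmall, sigmaLarge, sigmaLeft, sigmaRight] <;> omega

theorem shift (h : SigmaBranch T f) (k l : ℤ) : SigmaBranch T (shift f k l) := by
  cases h <;> constructor <;> assumption

theorem map_shift (h : SigmaBranch T f) (k l : ℤ) :
    T (GMN.shift f k l) = GMN.shift (T f) k l := by
  cases h <;> ext <;>
    simp only [sigmaSmall, sigmaLarge, sigmaLeft, sigmaRight, GMN.shift] <;> ring

theorem exists_inverse (h : SigmaBranch T f) (hf : CondsI_V f) :
    ∃ T', SigmaBranch T' (T f) ∧ ∃ k l, T' (T f) = GMN.shift f k l := by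
  have := condsI_V_iff.1 hf
  cases h
  · refine ⟨sigmaLarge, ?_, 1, 1, ?_⟩
    · constructor <;> simp only [sigmaSmall] <;> omega
    · ext <;> simp only [sigmaSmall, sigmaLarge, GMN.shift] <;> ring
  · refine ⟨sigmaSmall, ?_, 1, 1, ?_⟩
    · constructor <;> simp only [sigmaLarge] <;> omega
    · ext <;> simp only [sigmaSmall, sigmaLarge, GMN.shift] <;> ring
  · refine ⟨sigmaLeft, ?_, 0, 2, ?_⟩
    · constructor <;> simp only [sigmaLeft] <;> omega
    · ext <;> simp only [sigmaLeft, GMN.shift] <;> ring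
  · refine ⟨sigmaRight, ?_, 2, 0, ?_⟩
    · constructor <;> simp only [sigmaRight] <;> omega
    · ext <;> simp only [sigmaRight, GMN.shift] <;> ring

theorem exists_psi2 (h : SigmaBranch T f) :
    ∃ T', SigmaBranch T' (psi2 f) ∧ T' (psi2 f) = psi2 (T f) := by
  cases h with
  | small pos lt0 lt2 =>
    refine ⟨_, .small pos lt2 lt0, ?_⟩
    simp only [sigmaSmall, psi2, Tuple.mk.injEq, true_and, and_true]
    omega
  | large pos gt0 gt2 =>
    refine ⟨_, .large pos gt2 gt0, ?_⟩
    simp only [sigmaLarge, psi2, Tuple.mk.injEq, true_and, and_true]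
    omega
  | left pos gt0 lt2 => exact ⟨_, .right pos lt2 gt0, rfl⟩
  | right pos lt0 gt2 => exact ⟨_, .left pos gt2 lt0, rfl⟩

theorem exists_flip (h : SigmaBranch T f) (hf : CondsI_V f) :
    ∃ T', SigmaBranch T' (flip f) ∧ ∃ k l, T' (flip f) = GMN.shift (flip (T f)) k l := by
  have := condsI_V_iff.1 hf
  cases h
  · refine ⟨sigmaLarge, ?_, 1, 1, ?_⟩
    · constructor <;> simp only [flip] <;> omega
    · ext <;> simp only [sigmaSmall, sigmaLarge, flip, GMN.shift] <;> ring
  · refine ⟨sigmaSmall, ?_, 1, 1, ?_⟩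
    · constructor <;> simp only [flip] <;> omega
    · ext <;> simp only [sigmaSmall, sigmaLarge, flip, GMN.shift] <;> ring
  · refine ⟨sigmaLeft, ?_, 0, 2, ?_⟩
    · constructor <;> simp only [flip] <;> omega
    · ext <;> simp only [sigmaLeft, flip, GMN.shift] <;> ring
  · refine ⟨sigmaRight, ?_, 2, 0, ?_⟩
    · constructor <;> simp only [flip] <;> omega
    · ext <;> simp only [sigmaRight, flip, GMN.shift] <;> ring

end SigmaBranch

theorem CondsI_V.sigma {f : Tuple} (hf : CondsI_V f) : CondsI_V (sigma f) := by
  by_cases h : f.q0 = 0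
  · rwa [sigma_of_q0_eq_zero h]
  · obtain ⟨T, hT⟩ := hf.exists_sigmaBranch h
    rw [hT.sigma_eq]
    exact hT.condsI_V_reduce hf

theorem sigma_sigma {f : Tuple} (hf : CondsI_V f) : sigma (sigma f) = f := by
  by_cases h : f.q0 = 0
  · rw [sigma_of_q0_eq_zero h, sigma_of_q0_eq_zero h]
  obtain ⟨T, hT⟩ := hf.exists_sigmaBranch h
  obtain ⟨T', hT', a, b, hab⟩ := hT.exists_inverse hf
  obtain ⟨k, l, hkl⟩ := exists_reduce_eq_shift hT'.q0_pos.le (hT.q0_lt hf)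
  calc sigma (sigma f) = reduce (T' (shift (T f) k l)) := by
        rw [hT.sigma_eq, hkl, (hT'.shift k l).sigma_eq]
    _ = reduce f := by rw [hT'.map_shift, reduce_shift, hab, reduce_shift]
    _ = f := reduce_eq_self hf

theorem sigma_psi2 {f : Tuple} (hf : CondsI_V f) : sigma (psi2 f) = psi2 (sigma f) := by
  by_cases h : f.q0 = 0
  · rw [sigma_of_q0_eq_zero h, sigma_of_q0_eq_zero (f := psi2 f) h]
  · obtain ⟨T, hT⟩ := hf.exists_sigmaBranch h
    obtain ⟨T', hT', e⟩ := hT.exists_psi2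
    rw [hT'.sigma_eq, e, hT.sigma_eq, psi2_reduce]

theorem sigma_psi3 {f : Tuple} (hf : CondsI_V f) : sigma (psi3 f) = psi3 (sigma f) := by
  by_cases h : f.q0 = 0
  · rw [sigma_of_q0_eq_zero h, sigma_of_q0_eq_zero (f := psi3 f) (by simp [psi3, h])]
  obtain ⟨T, hT⟩ := hf.exists_sigmaBranch h
  obtain ⟨T', hT', a, b, hab⟩ := hT.exists_flip hf
  obtain ⟨_, hT'', -⟩ := hT.exists_inverse hf
  obtain ⟨k, l, hkl⟩ := exists_reduce_eq_shift hT''.q0_pos.le (hT.q0_lt hf)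
  obtain ⟨m, n, hmn⟩ := exists_reduce_eq_shift (f := flip f) hT'.q0_pos.le
    (sub_lt_self _ hT.q0_pos)
  calc sigma (psi3 f) = reduce (T' (flip f)) := by
        rw [psi3_eq_reduce_flip, hmn, (hT'.shift m n).sigma_eq, hT'.map_shift, reduce_shift]
    _ = reduce (flip (T f)) := by rw [hab, reduce_shift]
    _ = psi3 (sigma f) := by
        rw [hT.sigma_eq, hkl, psi3_eq_reduce_flip, flip_shift, reduce_shift]

/-! ### Vertices, arcs and orbits -/

/-- The vertex of `Γ(f)` on the `i`-th circle with position `x` modulo `2lᵢ`. -/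
def pt (f : Tuple) (i : ZMod 3) (x : ℤ) : ZMod 3 × ℤ := (i, x % f.twol i)

theorem pt_eq_pt {f : Tuple} {i : ZMod 3} {x y : ℤ} (k : ℤ) (h : x = y + f.twol i * k) :
    pt f i x = pt f i y := by
  rw [pt, h, Int.add_mul_emod_self_left, pt]

theorem CondsI_V.h_pos {f : Tuple} (hf : CondsI_V f) (i : ZMod 3) : 0 < f.h i := hf.1.1 i

theorem CondsI_V.twol_pos {f : Tuple} (hf : CondsI_V f) (i : ZMod 3) : 0 < f.twol i :=
  add_pos (hf.h_pos _) (hf.h_pos _)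

theorem pt_mem {f : Tuple} (hf : CondsI_V f) (i : ZMod 3) (x : ℤ) : pt f i x ∈ Vtx f :=
  ⟨Int.emod_nonneg _ (hf.twol_pos i).ne', Int.emod_lt_of_pos _ (hf.twol_pos i)⟩

theorem exists_eq_pt {f : Tuple} {a : ZMod 3 × ℤ} (ha : a ∈ Vtx f) : ∃ i x, a = pt f i x :=
  ⟨a.1, a.2, Prod.ext rfl (Int.emod_eq_of_lt ha.1 ha.2).symm⟩

theorem exists_arc {f : Tuple} {a : ZMod 3 × ℤ} (ha : a ∈ Vtx f) :
    ∃ i x, 0 ≤ x ∧ x < f.h i ∧ (a = pt f i x ∨ a = pt f (i + 1) (-1 - x)) := by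
  obtain ⟨i, j⟩ := a
  obtain ⟨h0, h1⟩ : 0 ≤ j ∧ j < f.h (i - 1) + f.h i := ha
  have e : (i, j) = pt f i j := Prod.ext rfl (Int.emod_eq_of_lt h0 h1).symm
  by_cases hj : j < f.h i
  · exact ⟨i, j, h0, hj, .inl e⟩
  · refine ⟨i - 1, f.twol i - 1 - j, ?_, ?_, .inr ?_⟩
    · rw [Tuple.twol]; omega
    · rw [Tuple.twol]; omega
    · rw [sub_add_cancel, e]
      exact pt_eq_pt 1 (by ring)

section Arcs

variable {f : Tuple} {i : ZMod 3} {x : ℤ}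

theorem iota2_pt (hf : CondsI_V f) (h0 : 0 ≤ x) (hx : x < f.h i) :
    iota2 f (pt f i x) = pt f (i + 1) (-1 - x) := by
  have e : x % f.twol i = x :=
    Int.emod_eq_of_lt h0 (hx.trans (lt_add_of_pos_left _ (hf.h_pos _)))
  simp only [iota2, pt, e, hx, if_true, neg_sub_left, add_comm]

theorem iota2_pt_succ (hf : CondsI_V f) (h0 : 0 ≤ x) (hx : x < f.h i) :
    iota2 f (pt f (i + 1) (-1 - x)) = pt f i x := by
  have ht : f.twol (i + 1) = f.h i + f.h (i + 1) := by rw [Tuple.twol, add_sub_cancel_right]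
  have hpos := hf.h_pos (i + 1)
  have e : (-1 - x) % f.twol (i + 1) = f.twol (i + 1) - 1 - x := by
    rw [← Int.add_emod_right, Int.emod_eq_of_lt] <;> omega
  have hge : ¬ f.twol (i + 1) - 1 - x < f.h (i + 1) := by omega
  simp only [iota2, pt, e, hge, if_false, add_sub_cancel_right]
  congr 2
  ring

theorem rho_pt (f : Tuple) (i : ZMod 3) (x : ℤ) : rho f (pt f i x) = pt f i (x + f.q i) := by
  simp only [rho, pt, Int.emod_add_emod]

theorem rhoInv_pt (f : Tuple) (i : ZMod 3) (x : ℤ) : rhoInv f (pt f i x) = pt f i (x - f.q i) := by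
  simp only [rhoInv, pt, Int.emod_sub_emod]

theorem iota3_rho_pt (f : Tuple) (i : ZMod 3) (x : ℤ) :
    iota3 f (rho f (pt f i x)) = rho f (iota2 f (pt f i x)) := by
  simp only [iota3, Function.comp_apply, rho_pt, rhoInv_pt, add_sub_cancel_right]

theorem orbRel_two (hf : CondsI_V f) (h0 : 0 ≤ x) (hx : x < f.h i) :
    OrbRel f {2, 3} (pt f i x) (pt f (i + 1) (-1 - x)) :=
  .rel _ _ ⟨pt_mem hf _ _, pt_mem hf _ _, 2, .inl rfl, (iota2_pt hf h0 hx).symm⟩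

theorem orbRel_three (hf : CondsI_V f) (h0 : 0 ≤ x) (hx : x < f.h i) :
    OrbRel f {2, 3} (pt f i (x + f.q i)) (pt f (i + 1) (-1 - x + f.q (i + 1))) := by
  refine .rel _ _ ⟨pt_mem hf _ _, pt_mem hf _ _, 3, .inr rfl, ?_⟩
  rw [← rho_pt, ← rho_pt, ← iota2_pt hf h0 hx]
  exact (iota3_rho_pt f i x).symm

end Arcs

theorem orbRel_induction {f : Tuple} (hf : CondsI_V f) {R : ZMod 3 × ℤ → ZMod 3 × ℤ → Prop}
    (hR : Equivalence R)
    (h2 : ∀ i x, 0 ≤ x → x < f.h i → R (pt f i x) (pt f (i + 1) (-1 - x)))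
    (h3 : ∀ i x, 0 ≤ x → x < f.h i →
      R (pt f i (x + f.q i)) (pt f (i + 1) (-1 - x + f.q (i + 1))))
    {a b : ZMod 3 × ℤ} (h : OrbRel f {2, 3} a b) : R a b := by
  induction h with
  | refl a => exact hR.refl a
  | symm a b _ ih => exact hR.symm ih
  | trans a b c _ _ ih ih' => exact hR.trans ih ih'
  | rel a b hab =>
    obtain ⟨ha, -, c, rfl | rfl, rfl⟩ := hab
    · change R a (iota2 f a)
      obtain ⟨i, x, h0, hx, rfl | rfl⟩ := exists_arc ha
      · rw [iota2_pt hf h0 hx]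
        exact h2 i x h0 hx
      · rw [iota2_pt_succ hf h0 hx]
        exact hR.symm (h2 i x h0 hx)
    · change R a (iota3 f a)
      obtain ⟨j, y, rfl⟩ := exists_eq_pt ha
      obtain ⟨i, x, h0, hx, e⟩ := exists_arc (pt_mem hf j (y - f.q j))
      have e' : pt f j y = rho f (pt f j (y - f.q j)) := by rw [rho_pt, sub_add_cancel]
      rw [e', iota3_rho_pt]
      rcases e with e | e <;> rw [e]
      · rw [iota2_pt hf h0 hx, rho_pt, rho_pt]
        exact h3 i x h0 hx
      · rw [iota2_pt_succ hf h0 hx, rho_pt, rho_pt]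
        exact hR.symm (h3 i x h0 hx)

section Orbits

variable {f g k : Tuple} {S : Set (Fin 4)} {a b c : ZMod 3 × ℤ}

theorem OrbRel.of_eq (h : a = b) : OrbRel f S a b := h ▸ Relation.EqvGen.refl a

theorem OrbRel.symm (h : OrbRel f S a b) : OrbRel f S b a := Relation.EqvGen.symm _ _ h

theorem OrbRel.trans (h : OrbRel f S a b) (h' : OrbRel f S b c) : OrbRel f S a c :=
  Relation.EqvGen.trans _ _ _ h h'

/-- `Φ` maps the orbits of the colours `S` on `V(f)` into such orbits on `V(g)`. -/
structure MapsOrbits (f g : Tuple) (S : Set (Fin 4)) (Φ : ZMod 3 × ℤ → ZMod 3 × ℤ) : Prop where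
  mem : ∀ a ∈ Vtx f, Φ a ∈ Vtx g
  orbRel : ∀ a b, OrbRel f S a b → OrbRel g S (Φ a) (Φ b)

theorem MapsOrbits.comp {Φ Ψ : ZMod 3 × ℤ → ZMod 3 × ℤ} (hΨ : MapsOrbits g k S Ψ)
    (hΦ : MapsOrbits f g S Φ) : MapsOrbits f k S (Ψ ∘ Φ) :=
  ⟨fun a ha => hΨ.mem _ (hΦ.mem a ha), fun a b h => hΨ.orbRel _ _ (hΦ.orbRel a b h)⟩

theorem mapsOrbits_of_arcs {Φ : ZMod 3 × ℤ → ZMod 3 × ℤ} (hf : CondsI_V f)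
    (mem : ∀ i x, Φ (pt f i x) ∈ Vtx g)
    (h2 : ∀ i x, 0 ≤ x → x < f.h i →
      OrbRel g {2, 3} (Φ (pt f i x)) (Φ (pt f (i + 1) (-1 - x))))
    (h3 : ∀ i x, 0 ≤ x → x < f.h i →
      OrbRel g {2, 3} (Φ (pt f i (x + f.q i))) (Φ (pt f (i + 1) (-1 - x + f.q (i + 1))))) :
    MapsOrbits f g {2, 3} Φ where
  mem a ha := by
    obtain ⟨i, x, rfl⟩ := exists_eq_pt ha
    exact mem i x
  orbRel _ _ := orbRel_induction hf ((Relation.EqvGen.is_equivalence _).comap Φ) h2 h3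

theorem ThreeOrbits.transfer {Φ Ψ : ZMod 3 × ℤ → ZMod 3 × ℤ}
    (h : ThreeOrbits f S) (hΦ : MapsOrbits f g S Φ) (hΨ : MapsOrbits g f S Ψ)
    (hΨΦ : ∀ a ∈ Vtx f, OrbRel f S (Ψ (Φ a)) a)
    (hΦΨ : ∀ a ∈ Vtx g, OrbRel g S (Φ (Ψ a)) a) : ThreeOrbits g S := by
  obtain ⟨a, b, c, ha, hb, hc, hab, hac, hbc, hall⟩ := h
  have separates : ∀ x ∈ Vtx f, ∀ y ∈ Vtx f, ¬ OrbRel f S x y → ¬ OrbRel g S (Φ x) (Φ y) :=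
    fun x hx y hy hxy hxy' =>
      hxy (((hΨΦ x hx).symm.trans (hΨ.orbRel _ _ hxy')).trans (hΨΦ y hy))
  have covers : ∀ v ∈ Vtx g, ∀ x, OrbRel f S x (Ψ v) → OrbRel g S (Φ x) v :=
    fun v hv x hx => (hΦ.orbRel _ _ hx).trans (hΦΨ v hv)
  exact ⟨Φ a, Φ b, Φ c, hΦ.mem a ha, hΦ.mem b hb, hΦ.mem c hc, separates a ha b hb hab,
    separates a ha c hc hac, separates b hb c hc hbc, fun v hv => (hall (Ψ v) (hΨ.mem v hv)).imp
      (covers v hv a) (Or.imp (covers v hv b) (covers v hv c))⟩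

end Orbits

/-! ### The symmetries `ψ₁`, `ψ₂`, `ψ₃` preserve admissibility -/

/-- The renumbering of the circles underlying `ψ₁`. -/
def rotate (a : ZMod 3 × ℤ) : ZMod 3 × ℤ := (a.1 - 1, a.2)

theorem mapsOrbits_rotate {f : Tuple} (hf : CondsI_V f) :
    MapsOrbits f (psi1 f) {2, 3} rotate := by
  have hh : ∀ i, (psi1 f).h (i - 1) = f.h i := forall_zmod_three.2 ⟨rfl, rfl, rfl⟩
  have hq : ∀ i, (psi1 f).q (i - 1) = f.q i := forall_zmod_three.2 ⟨rfl, rfl, rfl⟩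
  have rotate_pt : ∀ i x, rotate (pt f i x) = pt (psi1 f) (i - 1) x := fun i x => by
    rw [rotate, pt, pt, Tuple.twol, Tuple.twol, hh, hh]
  have e : ∀ i : ZMod 3, i + 1 - 1 = i - 1 + 1 := fun i => by ring
  refine mapsOrbits_of_arcs hf (fun i x => ?_) (fun i x h0 hx => ?_) (fun i x h0 hx => ?_)
  · rw [rotate_pt]
    exact pt_mem hf.psi1 _ _
  · rw [rotate_pt, rotate_pt, e]
    exact orbRel_two hf.psi1 h0 (by rwa [hh])
  · rw [rotate_pt, rotate_pt, ← hq i, ← hq (i + 1), e]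
    exact orbRel_three hf.psi1 h0 (by rwa [hh])

theorem Admissible.psi1 {f : Tuple} (hf : Admissible f) : Admissible (psi1 f) := by
  have hg := hf.condsI_V.psi1
  have rotate_rotate_rotate : ∀ a, rotate (rotate (rotate a)) = a := fun a =>
    Prod.ext (by rw [rotate, rotate, rotate]; ring_nf; reduce_mod_char) rfl
  refine ⟨hg.1, hg.2, hf.2.2.transfer (mapsOrbits_rotate hf.condsI_V)
    ((mapsOrbits_rotate hg.psi1).comp (mapsOrbits_rotate hg))
    (fun a _ => .of_eq (rotate_rotate_rotate a)) (fun a _ => .of_eq (rotate_rotate_rotate a))⟩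

/-- The vertex map `(i, j) ↦ (-i, qᵢ - 1 - j)` underlying `ψ₂`. It exchanges the colours 2
and 3. -/
def mirror (f : Tuple) (a : ZMod 3 × ℤ) : ZMod 3 × ℤ :=
  (-a.1, (f.q a.1 - 1 - a.2) % f.twol a.1)

theorem q_psi2_neg (f : Tuple) : ∀ i, (psi2 f).q (-i) = f.q i :=
  forall_zmod_three.2 ⟨rfl, rfl, rfl⟩

theorem mirror_pt (f : Tuple) (i : ZMod 3) (x : ℤ) :
    mirror f (pt f i x) = pt (psi2 f) (-i) (f.q i - 1 - x) := by
  have ht : ∀ i, (psi2 f).twol (-i) = f.twol i :=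
    forall_zmod_three.2 ⟨add_comm _ _, add_comm _ _, add_comm _ _⟩
  simp only [mirror, pt, ht, Int.sub_emod_emod]

theorem mapsOrbits_mirror {f : Tuple} (hf : CondsI_V f) :
    MapsOrbits f (psi2 f) {2, 3} (mirror f) := by
  have hh : ∀ i, (psi2 f).h (-i - 1) = f.h i := forall_zmod_three.2 ⟨rfl, rfl, rfl⟩
  have e : ∀ i : ZMod 3, -(i + 1) = -i - 1 := fun i => by ring
  refine mapsOrbits_of_arcs hf (fun i x => ?_) (fun i x h0 hx => ?_) (fun i x h0 hx => ?_)
  · rw [mirror_pt]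
    exact pt_mem hf.psi2 _ _
  · have := orbRel_three hf.psi2 (i := -i - 1) h0 (by rwa [hh])
    rw [sub_add_cancel, q_psi2_neg, ← e, q_psi2_neg] at this
    rw [mirror_pt, mirror_pt]
    convert this.symm using 2 <;> ring
  · have := orbRel_two hf.psi2 (i := -i - 1) h0 (by rwa [hh])
    rw [sub_add_cancel] at this
    rw [mirror_pt, mirror_pt, e]
    convert this.symm using 2 <;> ring

theorem mirror_mirror {f : Tuple} {a : ZMod 3 × ℤ} (ha : a ∈ Vtx f) :
    mirror (psi2 f) (mirror f a) = a := by
  obtain ⟨i, x, rfl⟩ := exists_eq_pt ha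
  rw [mirror_pt, mirror_pt, neg_neg, q_psi2_neg, psi2_psi2, sub_sub_cancel]

theorem Admissible.psi2 {f : Tuple} (hf : Admissible f) : Admissible (psi2 f) := by
  have hg := hf.condsI_V.psi2
  exact ⟨hg.1, hg.2, hf.2.2.transfer (mapsOrbits_mirror hf.condsI_V) (mapsOrbits_mirror hg)
    (fun _ ha => .of_eq (mirror_mirror ha)) (fun _ ha => .of_eq (mirror_mirror ha))⟩

theorem exists_q_psi3 (f : Tuple) : ∀ i, ∃ k, (psi3 f).q i = -f.q i + f.twol i * k := by
  have key : ∀ x m : ℤ, ∃ k, x % m = x + m * k := fun x m =>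
    ⟨-(x / m), by rw [Int.emod_def, mul_neg, sub_eq_add_neg]⟩
  exact forall_zmod_three.2 ⟨key _ _, key _ _, key _ _⟩

theorem pt_psi3 (f : Tuple) : pt (psi3 f) = pt f := rfl

theorem rhoInv_psi3_rhoInv {f : Tuple} {a : ZMod 3 × ℤ} (ha : a ∈ Vtx f) :
    rhoInv (psi3 f) (rhoInv f a) = a := by
  obtain ⟨i, x, rfl⟩ := exists_eq_pt ha
  obtain ⟨k, hk⟩ := exists_q_psi3 f i
  rw [rhoInv_pt, ← pt_psi3, rhoInv_pt, pt_psi3, hk]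
  exact pt_eq_pt (-k) (by ring)

/-- Since `ι₃` is conjugate to `ι₂` by `ρ`, the map `ρ⁻¹` turns the colours 2 and 3 of `Γ(f)` into
the colours 3 and 2 of `Γ(ψ₃ f)`. -/
theorem mapsOrbits_rhoInv {f : Tuple} (hf : CondsI_V f) :
    MapsOrbits f (psi3 f) {2, 3} (rhoInv f) := by
  choose k hk using exists_q_psi3 f
  have rhoInv_pt' : ∀ i x, rhoInv f (pt f i x) = pt (psi3 f) i (x + (psi3 f).q i) := fun i x => by
    rw [rhoInv_pt, pt_psi3, hk]
    exact pt_eq_pt (-k i) (by ring)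
  refine mapsOrbits_of_arcs hf (fun i x => ?_) (fun i x h0 hx => ?_) (fun i x h0 hx => ?_)
  · rw [rhoInv_pt']
    exact pt_mem hf.psi3 _ _
  · rw [rhoInv_pt', rhoInv_pt']
    exact orbRel_three hf.psi3 h0 hx
  · rw [rhoInv_pt, rhoInv_pt, add_sub_cancel_right, add_sub_cancel_right, ← pt_psi3]
    exact orbRel_two hf.psi3 h0 hx

theorem Admissible.psi3 {f : Tuple} (hf : Admissible f) : Admissible (psi3 f) := by
  have hg := hf.condsI_V.psi3
  have back := mapsOrbits_rhoInv hg
  have inverse := fun a => rhoInv_psi3_rhoInv (f := GMN.psi3 f) (a := a)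
  rw [psi3_psi3 hf.condsI_V] at back inverse
  exact ⟨hg.1, hg.2, hf.2.2.transfer (mapsOrbits_rhoInv hf.condsI_V) back
    (fun _ ha => .of_eq (rhoInv_psi3_rhoInv ha)) (fun a ha => .of_eq (inverse a ha))⟩

/-! ### Level tuples -/

/-- `(r, r, s; q₀, q₁, q₂)` with `r < q₀ < s`: up to `ψ₂`, these are the tuples that `σ` may change
while preserving the complexity. -/
structure IsLevel (f : Tuple) : Prop where
  h1_eq : f.h1 = f.h0
  lt_q0 : f.h0 < f.q0
  q0_lt : f.q0 < f.h2

namespace IsLevel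

variable {f : Tuple}

theorem sigma_eq (h : IsLevel f) (hf : CondsI_V f) : sigma f =
    ⟨f.h0, f.h1, f.h2, f.h0 + f.h2 - f.q0, f.q1, (2 * f.q0 + f.q2) % (f.h1 + f.h2)⟩ := by
  have := condsI_V_iff.1 hf
  obtain ⟨h1_eq, lt_q0, q0_lt⟩ := h
  have branch : SigmaBranch sigmaLeft f := .left (by omega) lt_q0 q0_lt
  rw [branch.sigma_eq]
  simp only [sigmaLeft, reduce, h1_eq, add_sub_cancel_left, add_sub_cancel_right, Tuple.mk.injEq,
    true_and, and_true]
  constructor <;> apply Int.emod_eq_of_lt <;> omega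

theorem sigma (h : IsLevel f) (hf : CondsI_V f) : IsLevel (sigma f) := by
  rw [h.sigma_eq hf]
  obtain ⟨h1_eq, lt_q0, q0_lt⟩ := h
  exact ⟨h1_eq, by simp only; omega, by simp only; omega⟩

theorem psi3 (h : IsLevel f) (hf : CondsI_V f) : IsLevel (psi3 f) := by
  have := condsI_V_iff.1 hf
  obtain ⟨h1_eq, lt_q0, q0_lt⟩ := h
  have e : -f.q0 % (f.h2 + f.h0) = f.h2 + f.h0 - f.q0 := by
    rw [← Int.add_emod_left, ← sub_eq_add_neg, Int.emod_eq_of_lt] <;> omega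
  constructor <;> simp only [GMN.psi3, e] <;> omega

theorem h0_sigma (h : IsLevel f) (hf : CondsI_V f) : (GMN.sigma f).h0 = f.h0 := by
  rw [h.sigma_eq hf]

theorem h1_sigma (h : IsLevel f) (hf : CondsI_V f) : (GMN.sigma f).h1 = f.h0 := by
  rw [h.sigma_eq hf, h.h1_eq]

theorem h2_sigma (h : IsLevel f) (hf : CondsI_V f) : (GMN.sigma f).h2 = f.h2 := by
  rw [h.sigma_eq hf]

theorem q0_sigma (h : IsLevel f) (hf : CondsI_V f) :
    (GMN.sigma f).q0 = f.h0 + f.h2 - f.q0 := by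
  rw [h.sigma_eq hf]

theorem q1_sigma (h : IsLevel f) (hf : CondsI_V f) : (GMN.sigma f).q1 = f.q1 := by
  rw [h.sigma_eq hf]

theorem exists_q2_sigma (h : IsLevel f) (hf : CondsI_V f) :
    ∃ k, (GMN.sigma f).q2 = 2 * f.q0 + f.q2 + (f.h1 + f.h2) * k := by
  rw [h.sigma_eq hf]
  exact ⟨-((2 * f.q0 + f.q2) / (f.h1 + f.h2)), by
    simp only [Int.emod_def, mul_neg, ← sub_eq_add_neg]⟩

theorem pt_sigma (h : IsLevel f) (hf : CondsI_V f) : pt (GMN.sigma f) = pt f := by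
  rw [h.sigma_eq hf]
  rfl

variable {t : ℤ}

theorem orbRel_one_two (h : IsLevel f) (hf : CondsI_V f) (h0 : 0 ≤ t) (ht : t < f.h0) :
    OrbRel f {2, 3} (pt f 1 (f.q1 - 1 - t)) (pt f 2 (-1 - f.q0 - t)) := by
  obtain ⟨h1_eq, lt_q0, q0_lt⟩ := h
  have three : OrbRel f {2, 3} (pt f 0 (t + f.q0)) (pt f 1 (-1 - t + f.q1)) :=
    orbRel_three hf h0 ht
  have two : OrbRel f {2, 3} (pt f 2 (f.h2 + f.h0 - 1 - f.q0 - t))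
      (pt f 0 (-1 - (f.h2 + f.h0 - 1 - f.q0 - t))) :=
    orbRel_two hf (by omega) (by rw [h_two]; omega)
  rw [pt_eq_pt (i := 2) (y := -1 - f.q0 - t) 1 (by rw [twol_two, h1_eq]; ring),
    pt_eq_pt (i := 0) (y := t + f.q0) (-1) (by rw [twol_zero]; ring)] at two
  rw [show f.q1 - 1 - t = -1 - t + f.q1 by ring]
  exact (two.trans three).symm

theorem orbRel_one_two' (h : IsLevel f) (hf : CondsI_V f) (h0 : 0 ≤ t) (ht : t < f.h0) :
    OrbRel f {2, 3} (pt f 1 (-1 - t)) (pt f 2 (f.q0 + f.q2 - 1 - t)) := by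
  obtain ⟨h1_eq, lt_q0, q0_lt⟩ := h
  have two : OrbRel f {2, 3} (pt f 0 t) (pt f 1 (-1 - t)) := orbRel_two hf h0 ht
  have three : OrbRel f {2, 3} (pt f 2 (f.q0 - 1 - t + f.q2))
      (pt f 0 (-1 - (f.q0 - 1 - t) + f.q0)) :=
    orbRel_three hf (by omega) (by rw [h_two]; omega)
  rw [show -1 - (f.q0 - 1 - t) + f.q0 = t by ring] at three
  rw [show f.q0 + f.q2 - 1 - t = f.q0 - 1 - t + f.q2 by ring]
  exact (three.trans two).symm

theorem orbRel_two_two (h : IsLevel f) (hf : CondsI_V f) {x y : ℤ} (hx : 0 ≤ x ∧ x < f.h2)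
    (hy : 0 ≤ y ∧ y < f.h2) (k : ℤ) (hxy : x = y - f.q0 + (f.h1 + f.h2) * k) :
    OrbRel f {2, 3} (pt f 2 (y + f.q2)) (pt f 2 x) := by
  have three : OrbRel f {2, 3} (pt f 2 (y + f.q2)) (pt f 0 (-1 - y + f.q0)) :=
    orbRel_three hf hy.1 hy.2
  have two : OrbRel f {2, 3} (pt f 2 x) (pt f 0 (-1 - x)) := orbRel_two hf hx.1 hx.2
  rw [pt_eq_pt (i := 0) (y := -1 - x) k (by rw [twol_zero, hxy, h.h1_eq]; ring)] at three
  exact three.trans two.symm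

end IsLevel

/-- Retraction of `V(f)` onto circles 1 and 2 along the arcs of colour 2 that end on circle 0. -/
def collapse (f : Tuple) (a : ZMod 3 × ℤ) : ZMod 3 × ℤ := if a.1 = 0 then iota2 f a else a

/-- Relabelling of circles 1 and 2 for the level move from `f` to `σ(f)`. -/
def twist (f : Tuple) (a : ZMod 3 × ℤ) : ZMod 3 × ℤ :=
  if a.1 = 1 then pt f 1 (f.q1 - 1 - a.2) else pt f 2 (f.q0 + a.2)

/-- The vertex map underlying the level move from `f` to `σ(f)`. It is not injective, but it is
a bijection on `{2,3}`-orbits. -/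
def slide (f : Tuple) (a : ZMod 3 × ℤ) : ZMod 3 × ℤ := twist f (collapse f a)

section Slide

variable {f : Tuple} {x : ℤ}

theorem collapse_pt_one (f : Tuple) (x : ℤ) : collapse f (pt f 1 x) = pt f 1 x :=
  if_neg (show (1 : ZMod 3) ≠ 0 by decide)

theorem collapse_pt_two (f : Tuple) (x : ℤ) : collapse f (pt f 2 x) = pt f 2 x :=
  if_neg (show (2 : ZMod 3) ≠ 0 by decide)

theorem collapse_pt_zero (hf : CondsI_V f) (h0 : 0 ≤ x) (hx : x < f.h0) :
    collapse f (pt f 0 x) = pt f 1 (-1 - x) :=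
  (if_pos rfl).trans (iota2_pt (i := 0) hf h0 hx)

theorem collapse_pt_zero_neg (hf : CondsI_V f) (h0 : 0 ≤ x) (hx : x < f.h2) :
    collapse f (pt f 0 (-1 - x)) = pt f 2 x :=
  (if_pos rfl).trans (iota2_pt_succ (i := 2) hf h0 hx)

theorem collapse_eq_pt (hf : CondsI_V f) {a : ZMod 3 × ℤ} (ha : a ∈ Vtx f) :
    ∃ x, collapse f a = pt f 1 x ∨ collapse f a = pt f 2 x := by
  obtain ⟨i, x, h0, hx, h⟩ := exists_arc ha
  revert i
  refine forall_zmod_three.2 ⟨?_, ?_, ?_⟩ <;> rintro hx (rfl | rfl)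
  · exact ⟨_, .inl (collapse_pt_zero hf h0 hx)⟩
  · exact ⟨_, .inl (collapse_pt_one f _)⟩
  · exact ⟨_, .inl (collapse_pt_one f _)⟩
  · exact ⟨_, .inr (collapse_pt_two f _)⟩
  · exact ⟨_, .inr (collapse_pt_two f _)⟩
  · exact ⟨_, .inr (collapse_pt_zero_neg hf h0 hx)⟩

theorem orbRel_collapse (hf : CondsI_V f) {a : ZMod 3 × ℤ} (ha : a ∈ Vtx f) :
    OrbRel f {2, 3} (collapse f a) a := by
  rw [collapse]
  split_ifs
  · obtain ⟨i, x, h0, hx, rfl | rfl⟩ := exists_arc ha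
    · rw [iota2_pt hf h0 hx]
      exact (orbRel_two hf h0 hx).symm
    · rw [iota2_pt_succ hf h0 hx]
      exact orbRel_two hf h0 hx
  · exact .of_eq rfl

theorem twist_pt_one (f : Tuple) (x : ℤ) : twist f (pt f 1 x) = pt f 1 (f.q1 - 1 - x) :=
  (if_pos rfl).trans (by simp only [pt, Int.sub_emod_emod])

theorem twist_pt_two (f : Tuple) (x : ℤ) : twist f (pt f 2 x) = pt f 2 (f.q0 + x) :=
  (if_neg (show (2 : ZMod 3) ≠ 1 by decide)).trans (by simp only [pt, Int.add_emod_emod])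

theorem slide_pt_one (f : Tuple) (x : ℤ) : slide f (pt f 1 x) = pt f 1 (f.q1 - 1 - x) := by
  rw [slide, collapse_pt_one, twist_pt_one]

theorem slide_pt_two (f : Tuple) (x : ℤ) : slide f (pt f 2 x) = pt f 2 (f.q0 + x) := by
  rw [slide, collapse_pt_two, twist_pt_two]

theorem slide_pt_zero (hf : CondsI_V f) (h0 : 0 ≤ x) (hx : x < f.h0) :
    slide f (pt f 0 x) = pt f 1 (f.q1 + x) := by
  rw [slide, collapse_pt_zero hf h0 hx, twist_pt_one]
  ring_nf

theorem slide_pt_zero_neg (hf : CondsI_V f) (h0 : 0 ≤ x) (hx : x < f.h2) :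
    slide f (pt f 0 (-1 - x)) = pt f 2 (f.q0 + x) := by
  rw [slide, collapse_pt_zero_neg hf h0 hx, twist_pt_two]

theorem slide_mem (hf : CondsI_V f) {a : ZMod 3 × ℤ} (ha : a ∈ Vtx f) : slide f a ∈ Vtx f := by
  obtain ⟨x, e | e⟩ := collapse_eq_pt hf ha
  · rw [slide, e, twist_pt_one]
    exact pt_mem hf _ _
  · rw [slide, e, twist_pt_two]
    exact pt_mem hf _ _

theorem IsLevel.slide_slide (h : IsLevel f) (hf : CondsI_V f) {a : ZMod 3 × ℤ} (ha : a ∈ Vtx f) :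
    slide (GMN.sigma f) (slide f a) = collapse f a := by
  obtain ⟨x, e | e⟩ := collapse_eq_pt hf ha
  · have e' : slide f a = pt f 1 (f.q1 - 1 - x) := by rw [slide, e, twist_pt_one]
    rw [e', ← h.pt_sigma hf, slide_pt_one,
      h.q1_sigma hf, sub_sub_cancel, e, h.pt_sigma hf]
  · have e' : slide f a = pt f 2 (f.q0 + x) := by rw [slide, e, twist_pt_two]
    rw [e', ← h.pt_sigma hf, slide_pt_two,
      h.q0_sigma hf, e, h.pt_sigma hf]
    exact pt_eq_pt 1 (by rw [twol_two, h.h1_eq]; ring)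

theorem IsLevel.orbRel_slide_two (h : IsLevel f) (hf : CondsI_V f) (h0 : 0 ≤ x) :
    ∀ i, x < f.h i → OrbRel (GMN.sigma f) {2, 3} (slide f (pt f i x))
      (slide f (pt f (i + 1) (-1 - x))) := by
  refine forall_zmod_three.2 ⟨fun hx => .of_eq ?_, fun hx => ?_, fun hx => .of_eq ?_⟩
  · refine (slide_pt_zero hf h0 hx).trans (Eq.trans ?_ (slide_pt_one f _).symm)
    ring_nf
  · have arc := (h.sigma hf).orbRel_one_two hf.sigma h0
      (by rw [h.h0_sigma hf]; exact hx.trans_eq h.h1_eq)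
    rw [h.pt_sigma hf, h.q0_sigma hf, h.q1_sigma hf,
      pt_eq_pt (i := 2) (y := f.q0 + (-1 - x)) (-1) (by rw [twol_two, h.h1_eq]; ring)] at arc
    rw [slide_pt_one]
    exact arc.trans (.of_eq (slide_pt_two f _).symm)
  · exact (slide_pt_two f x).trans (slide_pt_zero_neg hf h0 hx).symm

theorem IsLevel.orbRel_slide_three_zero (h : IsLevel f) (hf : CondsI_V f) (h0 : 0 ≤ x)
    (hx : x < f.h0) : OrbRel (GMN.sigma f) {2, 3} (slide f (pt f 0 (x + f.q0)))
      (slide f (pt f 1 (-1 - x + f.q1))) := by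
  have lt_q0 := h.lt_q0
  have q0_lt := h.q0_lt
  have arc : OrbRel (GMN.sigma f) {2, 3} (pt (GMN.sigma f) 1 x) (pt (GMN.sigma f) 2 (-1 - x)) :=
    orbRel_two hf.sigma h0 (by rwa [h_one, h.h1_sigma hf])
  rw [pt_eq_pt (i := 0) (y := -1 - (f.h2 + f.h0 - 1 - x - f.q0)) 1 (by rw [twol_zero]; ring),
    slide_pt_zero_neg hf (by omega) (by omega), slide_pt_one,
    pt_eq_pt (i := 2) (y := -1 - x) 1 (by rw [twol_two, h.h1_eq]; ring),
    show f.q1 - 1 - (-1 - x + f.q1) = x by ring, ← h.pt_sigma hf]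
  exact arc.symm

theorem IsLevel.orbRel_slide_three_one (h : IsLevel f) (hf : CondsI_V f) (h0 : 0 ≤ x)
    (hx : x < f.h0) : OrbRel (GMN.sigma f) {2, 3} (slide f (pt f 1 (x + f.q1)))
      (slide f (pt f 2 (-1 - x + f.q2))) := by
  obtain ⟨k, hk⟩ := h.exists_q2_sigma hf
  have arc := (h.sigma hf).orbRel_one_two' hf.sigma h0 (by rwa [h.h0_sigma hf])
  rw [h.pt_sigma hf, h.q0_sigma hf, hk, pt_eq_pt (i := 2) (y := f.q0 + (-1 - x + f.q2)) (k + 1)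
    (by rw [twol_two, h.h1_eq]; ring)] at arc
  rwa [slide_pt_one, slide_pt_two, show f.q1 - 1 - (x + f.q1) = -1 - x by ring]

theorem IsLevel.orbRel_slide_three_two (h : IsLevel f) (hf : CondsI_V f) (h0 : 0 ≤ x)
    (hx : x < f.h2) : OrbRel (GMN.sigma f) {2, 3} (slide f (pt f 2 (x + f.q2)))
      (slide f (pt f 0 (-1 - x + f.q0))) := by
  obtain ⟨k, hk⟩ := h.exists_q2_sigma hf
  have := h.lt_q0
  have := h.q0_lt
  have := hf.h_pos 0
  rw [h_zero] at this
  have slid : ∀ y l, 0 ≤ y → y < f.h2 → x = y + f.q0 + (f.h1 + f.h2) * l →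
      OrbRel (GMN.sigma f) {2, 3} (slide f (pt f 2 (x + f.q2)))
        (slide f (pt f 0 (-1 - x + f.q0))) := fun y l hy hy' e => by
    rw [pt_eq_pt (i := 0) (y := -1 - y) (-l) (by rw [twol_zero, e, h.h1_eq]; ring),
      slide_pt_zero_neg hf hy hy', slide_pt_two,
      pt_eq_pt (i := 2) (x := f.q0 + y) (y := x) (-l) (by rw [twol_two, e]; ring)]
    have arc := (h.sigma hf).orbRel_two_two hf.sigma (x := x) (y := y)
      (by rw [h.h2_sigma hf]; omega) (by rw [h.h2_sigma hf]; omega) (l + 1)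
      (by rw [h.q0_sigma hf, h.h1_sigma hf, h.h2_sigma hf, e, h.h1_eq]; ring)
    rwa [h.pt_sigma hf, hk, pt_eq_pt (i := 2) (y := f.q0 + (x + f.q2)) (k - l)
      (by rw [twol_two, e]; ring)] at arc
  rcases lt_or_ge x f.q0 with hxq | hxq
  · rcases lt_or_ge x (f.q0 - f.h0) with hxh | hxh
    · exact slid (x - f.q0 + (f.h2 + f.h0)) (-1) (by omega) (by omega) (by rw [h.h1_eq]; ring)
    · have arc : OrbRel (GMN.sigma f) {2, 3} (pt (GMN.sigma f) 1 (f.q0 - 1 - x + (GMN.sigma f).q1))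
          (pt (GMN.sigma f) 2 (-1 - (f.q0 - 1 - x) + (GMN.sigma f).q2)) :=
        orbRel_three hf.sigma (by omega) (by rw [h_one, h.h1_sigma hf]; omega)
      rw [h.pt_sigma hf, h.q1_sigma hf, hk,
        pt_eq_pt (i := 2) (y := f.q0 + (x + f.q2)) k (by rw [twol_two]; ring)] at arc
      rw [show -1 - x + f.q0 = f.q0 - 1 - x by ring, slide_pt_zero hf (by omega) (by omega),
        slide_pt_two, add_comm f.q1]
      exact arc.symm
  · exact slid (x - f.q0) 0 (by omega) (by omega) (by ring)

theorem IsLevel.mapsOrbits_slide (h : IsLevel f) (hf : CondsI_V f) :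
    MapsOrbits f (GMN.sigma f) {2, 3} (slide f) := by
  have hV : Vtx (GMN.sigma f) = Vtx f := by rw [h.sigma_eq hf]; rfl
  refine mapsOrbits_of_arcs hf (fun i x => hV ▸ slide_mem hf (pt_mem hf i x))
    (fun i x h0 => h.orbRel_slide_two hf h0 i) (forall_zmod_three.2 ⟨?_, ?_, ?_⟩)
  · exact fun x h0 hx => h.orbRel_slide_three_zero hf h0 hx
  · exact fun x h0 hx => h.orbRel_slide_three_one hf h0 (hx.trans_eq h.h1_eq)
  · exact fun x h0 hx => h.orbRel_slide_three_two hf h0 hx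

theorem Admissible.sigma_of_isLevel (hf : Admissible f) (h : IsLevel f) : Admissible (sigma f) := by
  have hc := hf.condsI_V
  have back := (h.sigma hc).mapsOrbits_slide hc.sigma
  have inverse := fun a => (h.sigma hc).slide_slide hc.sigma (a := a)
  rw [sigma_sigma hc] at back inverse
  exact ⟨hc.sigma.1, hc.sigma.2, hf.2.2.transfer (h.mapsOrbits_slide hc) back
    (fun a ha => (h.slide_slide hc ha).symm ▸ orbRel_collapse hc ha)
    (fun a ha => (inverse a ha).symm ▸ orbRel_collapse hc.sigma ha)⟩

end Slide

/-! ### The effect on the complexity -/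

theorem nu_psi1 (f : Tuple) : nu (psi1 f) = nu f := by
  rw [nu, nu, psi1]
  ring

theorem nu_psi2 (f : Tuple) : nu (psi2 f) = nu f := by
  rw [nu, nu, psi2]
  ring

theorem nu_reduce (f : Tuple) : nu (reduce f) = nu f := rfl

section Complexity

variable {f : Tuple}

theorem h1_lt_of_nu_sigma_lt (hf : CondsI_V f) (h : nu (sigma f) < nu f) :
    f.h1 < f.h0 ∧ f.h1 < f.h2 := by
  by_cases hq : f.q0 = 0
  · rw [sigma_of_q0_eq_zero hq] at h
    exact absurd h (lt_irrefl _)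
  obtain ⟨T, branch⟩ := hf.exists_sigmaBranch hq
  rw [branch.sigma_eq, nu_reduce, nu, nu] at h
  cases branch <;> simp only [sigmaSmall, sigmaLarge, sigmaLeft, sigmaRight] at h <;> omega

theorem sigma_eq_or_nu_lt (hf : CondsI_V f) (h : f.h0 < f.h1 ∨ f.h2 < f.h1) :
    sigma f = f ∨ nu f < nu (sigma f) := by
  by_cases hq : f.q0 = 0
  · exact .inl (sigma_of_q0_eq_zero hq)
  right
  obtain ⟨T, branch⟩ := hf.exists_sigmaBranch hq
  rw [branch.sigma_eq, nu_reduce, nu, nu]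
  cases branch <;> simp only [sigmaSmall, sigmaLarge, sigmaLeft, sigmaRight] <;> omega

theorem sigma_eq_or_isLevel (hf : CondsI_V f) (h : nu (sigma f) = nu f) :
    sigma f = f ∨ IsLevel f ∨ IsLevel (psi2 f) := by
  by_cases hq : f.q0 = 0
  · exact .inl (sigma_of_q0_eq_zero hq)
  obtain ⟨T, branch⟩ := hf.exists_sigmaBranch hq
  rw [branch.sigma_eq, nu_reduce, nu, nu] at h
  rw [condsI_V_iff] at hf
  cases branch with
    simp only [sigmaSmall, sigmaLarge, sigmaLeft, sigmaRight] at h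
  | small | large => omega
  | left _ gt0 lt2 => exact .inr (.inl ⟨by omega, gt0, lt2⟩)
  | right _ lt0 gt2 =>
    have : f.h1 = f.h2 := by omega
    exact .inr (.inr ⟨this, gt2, lt0⟩)

end Complexity

/-! ### Equivalence under `H` -/

section HEquivalence

variable {f g k : Tuple}

theorem hEquiv_psi1 (hf : Admissible f) : HEquiv f (psi1 f) := .rel _ _ ⟨hf, hf.psi1, .inl rfl⟩

theorem hEquiv_psi2 (hf : Admissible f) : HEquiv f (psi2 f) :=
  .rel _ _ ⟨hf, hf.psi2, .inr (.inl rfl)⟩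

theorem hEquiv_psi3 (hf : Admissible f) : HEquiv f (psi3 f) :=
  .rel _ _ ⟨hf, hf.psi3, .inr (.inr rfl)⟩

theorem HEquiv.symm (h : HEquiv f g) : HEquiv g f := Relation.EqvGen.symm _ _ h

theorem HEquiv.trans (h : HEquiv f g) (h' : HEquiv g k) : HEquiv f k :=
  Relation.EqvGen.trans _ _ _ h h'

theorem HEquiv.gEquiv (h : HEquiv f g) : GEquiv f g :=
  Relation.EqvGen.mono (fun _ _ h => ⟨h.1, h.2.1, h.2.2.imp_right (Or.imp_right .inl)⟩) _ _ h

theorem HEquiv.induction {P : Tuple → Prop} (h1 : ∀ x, Admissible x → P x → P (psi1 x))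
    (h2 : ∀ x, Admissible x → P x → P (psi2 x)) (h3 : ∀ x, Admissible x → P x → P (psi3 x))
    (h : HEquiv f g) : P f → P g := by
  suffices P f ↔ P g from this.1
  induction h with
  | rel a b h =>
    obtain ⟨ha, hb, rfl | rfl | rfl⟩ := h
    · exact ⟨h1 a ha, fun h => h1 _ hb.psi1 (h1 _ hb h)⟩
    · exact ⟨h2 a ha, h2 _ hb⟩
    · exact ⟨h3 a ha, fun h => psi3_psi3 ha.condsI_V ▸ h3 _ hb h⟩
  | refl _ => rfl
  | symm _ _ _ ih => exact ih.symm
  | trans _ _ _ _ _ ih ih' => exact ih.trans ih'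

theorem HEquiv.admissible (h : HEquiv f g) (hf : Admissible f) : Admissible g :=
  h.induction (fun _ hx _ => hx.psi1) (fun _ hx _ => hx.psi2) (fun _ hx _ => hx.psi3) hf

theorem HEquiv.nu_eq (h : HEquiv f g) : nu g = nu f :=
  h.induction (P := fun x => nu x = nu f) (fun x _ hx => (nu_psi1 x).trans hx)
    (fun x _ hx => (nu_psi2 x).trans hx) (fun _ _ hx => hx) rfl

/-- `g` is an image of `f` under the group `⟨ψ₂, ψ₃⟩`. -/
def IsReflection (f g : Tuple) : Prop :=
  g = f ∨ g = psi2 f ∨ g = psi3 f ∨ g = psi2 (psi3 f)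

namespace IsReflection

theorem psi1 (h : IsReflection f g) :
    IsReflection (psi1 f) (psi1 g) ∨ IsReflection (GMN.psi1 (GMN.psi1 f)) (GMN.psi1 g) := by
  obtain rfl | rfl | rfl | rfl := h
  exacts [.inl (.inl rfl), .inr (.inr (.inl rfl)), .inl (.inr (.inr (.inl rfl))),
    .inr (.inr (.inr (.inr rfl)))]

theorem psi2 (h : IsReflection f g) : IsReflection f (psi2 g) := by
  obtain rfl | rfl | rfl | rfl := h
  exacts [.inr (.inl rfl), .inl rfl, .inr (.inr (.inr rfl)), .inr (.inr (.inl rfl))]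

theorem psi3 (h : IsReflection f g) (hf : CondsI_V f) : IsReflection f (psi3 g) := by
  obtain rfl | rfl | rfl | rfl := h
  · exact .inr (.inr (.inl rfl))
  · exact .inr (.inr (.inr (psi3_psi2 f)))
  · exact .inl (psi3_psi3 hf)
  · exact .inr (.inl (by rw [psi3_psi2, psi3_psi3 hf]))

theorem sigma (h : IsReflection f g) (hf : CondsI_V f) : IsReflection (sigma f) (sigma g) := by
  obtain rfl | rfl | rfl | rfl := h
  · exact .inl rfl
  · exact .inr (.inl (sigma_psi2 hf))
  · exact .inr (.inr (.inl (sigma_psi3 hf)))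
  · exact .inr (.inr (.inr (by rw [sigma_psi2 hf.psi3, sigma_psi3 hf])))

theorem hEquiv (h : IsReflection f g) (hf : Admissible f) : HEquiv f g := by
  obtain rfl | rfl | rfl | rfl := h
  exacts [.refl _, hEquiv_psi2 hf, hEquiv_psi3 hf, (hEquiv_psi3 hf).trans (hEquiv_psi2 hf.psi3)]

theorem h0_lt_or_h2_lt (h : IsReflection f g) (hf : f.h0 < f.h1 ∨ f.h2 < f.h1) :
    g.h0 < g.h1 ∨ g.h2 < g.h1 := by
  obtain rfl | rfl | rfl | rfl := h
  exacts [hf, hf.symm, hf, hf.symm]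

end IsReflection

theorem HEquiv.isReflection_rotation (h : HEquiv f g) (hf : CondsI_V f) :
    IsReflection f g ∨ IsReflection (psi1 f) g ∨ IsReflection (psi1 (psi1 f)) g := by
  refine h.induction (P := fun x =>
      IsReflection f x ∨ IsReflection (psi1 f) x ∨ IsReflection (psi1 (psi1 f)) x)
    (fun x _ hx => ?_) (fun x _ hx => ?_) (fun x _ hx => ?_) (.inl (.inl rfl))
  · rcases hx with hx | hx | hx
    · exact .inr hx.psi1
    · exact hx.psi1.symm.imp_right .inr
    · exact hx.psi1.imp_right .inl
  · exact hx.imp IsReflection.psi2 (Or.imp IsReflection.psi2 IsReflection.psi2)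
  · exact hx.imp (·.psi3 hf) (Or.imp (·.psi3 hf.psi1) (·.psi3 hf.psi1.psi1))

/-- The tuple `(h₁, h₀, h₂; q₂, q₁, q₀)`. -/
def swap (f : Tuple) : Tuple := psi1 (psi2 f)

theorem Admissible.swap (hf : Admissible f) : Admissible (swap f) := hf.psi2.psi1

theorem hEquiv_swap (hf : Admissible f) : HEquiv f (swap f) :=
  (hEquiv_psi2 hf).trans (hEquiv_psi1 hf.psi2)

theorem HEquiv.eq_of_isLevel (h : HEquiv f g) (hf : CondsI_V f) (h01 : f.h0 ≤ f.h1)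
    (h12 : f.h1 ≤ f.h2) (hg : IsLevel g) :
    g = f ∨ g = psi3 f ∨ g = swap f ∨ g = psi3 (swap f) := by
  have h1_eq := hg.h1_eq
  have h0_lt := hg.lt_q0.trans hg.q0_lt
  rcases h.isReflection_rotation hf with
    (rfl | rfl | rfl | rfl) | (rfl | rfl | rfl | rfl) | rfl | rfl | rfl | rfl
  case inl.inl => exact .inl rfl
  case inl.inr.inr.inl => exact .inr (.inl rfl)
  case inr.inr.inr.inl => exact .inr (.inr (.inl rfl))
  case inr.inr.inr.inr.inr => exact .inr (.inr (.inr (psi3_psi2 _).symm))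
  all_goals
    simp only [psi1, psi2, psi3] at h1_eq h0_lt
    omega

end HEquivalence

/-! ### Level moves realised by elements of `H` -/

/-- Level tuples at which `σ` does not act like an element of `H`: the conditions (b) of the
characterisation of roots. -/
def Exceptional (f : Tuple) : Prop :=
  f.h0 = f.h1 ∧ f.h0 < f.q0 ∧ f.q0 < f.h2 ∧
    f.q0 ≠ (-f.q2) % (f.h1 + f.h2) ∧ 2 * f.q0 ≠ f.h0 + f.h2 ∧
    (f.q1 = 0 → f.q0 ≠ ((f.h0 + f.h2) / 2 - f.q2) % (f.h2 + f.h0))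

theorem exceptional_swap_iff (f : Tuple) : Exceptional (swap f) ↔
    f.h0 = f.h1 ∧ f.h0 < f.q2 ∧ f.q2 < f.h2 ∧
      f.q2 ≠ (-f.q0) % (f.h2 + f.h0) ∧ 2 * f.q2 ≠ f.h0 + f.h2 ∧
      (f.q1 = 0 → f.q2 ≠ ((f.h0 + f.h2) / 2 - f.q0) % (f.h1 + f.h2)) := by
  rw [eq_comm (a := f.h0), Exceptional, swap, psi1, psi2]
  refine and_congr_right fun h => ?_
  simp only at h
  rw [h, add_comm f.h2]

theorem eq_emod_iff_dvd {x m : ℤ} (h0 : 0 ≤ x) (hx : x < m) (y : ℤ) :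
    x = y % m ↔ m ∣ y - x := by
  rw [← Int.modEq_iff_dvd, Int.ModEq, Int.emod_eq_of_lt h0 hx]

theorem two_mul_dvd_two_mul_add_iff {l x : ℤ} (h0 : 0 ≤ x) (hx : x < 2 * l) (y : ℤ) :
    2 * l ∣ 2 * (x + y) ↔ x = -y % (2 * l) ∨ x = (l - y) % (2 * l) := by
  rw [eq_emod_iff_dvd h0 hx, eq_emod_iff_dvd h0 hx, mul_dvd_mul_iff_left two_ne_zero]
  constructor
  · rintro ⟨n, hn⟩
    rcases Int.even_or_odd' n with ⟨c, rfl | rfl⟩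
    · exact .inl ⟨-c, by linear_combination -hn⟩
    · exact .inr ⟨-c, by linear_combination -hn⟩
  · rintro (⟨c, hc⟩ | ⟨c, hc⟩)
    · exact ⟨-(2 * c), by linear_combination -hc⟩
    · exact ⟨1 - 2 * c, by linear_combination -hc⟩

namespace IsLevel

variable {f : Tuple}

theorem sigma_eq_iff (h : IsLevel f) (hf : CondsI_V f) {g : Tuple} (hg : CondsI_V g)
    (h0 : g.h0 = f.h0) (h1 : g.h1 = f.h1) (h2 : g.h2 = f.h2) : GMN.sigma f = g ↔
      g.q0 + f.q0 = f.h0 + f.h2 ∧ g.q1 = f.q1 ∧ f.h1 + f.h2 ∣ 2 * f.q0 + f.q2 - g.q2 := by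
  obtain ⟨-, -, -, -, -, q2_nonneg, q2_lt⟩ := condsI_V_iff.1 hg
  rw [h.sigma_eq hf, Tuple.ext_iff, ← eq_emod_iff_dvd q2_nonneg (by rwa [← h1, ← h2])]
  simp only [h0, h1, h2, true_and]
  rw [eq_comm (a := f.q1), eq_comm (a := _ % _), sub_eq_iff_eq_add, eq_comm (b := _ + f.q0)]

theorem sigma_eq_self_iff (h : IsLevel f) (hf : CondsI_V f) :
    GMN.sigma f = f ↔ 2 * f.q0 = f.h0 + f.h2 := by
  rw [h.sigma_eq_iff hf hf rfl rfl rfl, two_mul, h.h1_eq, add_sub_cancel_right]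
  exact ⟨fun e => e.1, fun e => ⟨e, rfl, e ▸ dvd_rfl⟩⟩

theorem sigma_eq_swap_iff (h : IsLevel f) (hf : CondsI_V f) :
    GMN.sigma f = swap f ↔ f.q0 = -f.q2 % (f.h1 + f.h2) := by
  have := condsI_V_iff.1 hf
  obtain ⟨h1_eq, lt_q0, q0_lt⟩ := id h
  rw [h.sigma_eq_iff (g := swap f) hf hf.psi2.psi1 h1_eq h1_eq.symm rfl,
    eq_emod_iff_dvd (by omega) (by omega)]
  change f.q2 + f.q0 = _ ∧ f.q1 = _ ∧ _ ∣ 2 * f.q0 + f.q2 - f.q0 ↔ _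
  constructor
  · rintro ⟨e, -, -⟩
    exact ⟨-1, by rw [h1_eq]; linear_combination -e⟩
  · rintro ⟨n, hn⟩
    have n_neg : n < 0 := by nlinarith
    have neg_two_lt : -2 < n := by nlinarith
    obtain rfl : n = -1 := by omega
    exact ⟨by omega, rfl, 1, by linear_combination -hn⟩

theorem sigma_eq_psi3_iff (h : IsLevel f) (hf : CondsI_V f) :
    GMN.sigma f = GMN.psi3 f ↔ f.q1 = 0 ∧
      (f.q0 = -f.q2 % (f.h1 + f.h2) ∨
        f.q0 = ((f.h0 + f.h2) / 2 - f.q2) % (f.h2 + f.h0)) := by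
  have := condsI_V_iff.1 hf
  obtain ⟨h1_eq, lt_q0, -⟩ := id h
  have q0_iff : -f.q0 % (f.h2 + f.h0) + f.q0 = f.h0 + f.h2 := by
    rw [← Int.add_emod_left, Int.emod_eq_of_lt] <;> omega
  have q1_iff : -f.q1 % (f.h0 + f.h1) = f.q1 ↔ f.q1 = 0 := by
    rw [eq_comm, eq_emod_iff_dvd (by omega) (by omega)]
    constructor
    · rintro ⟨n, hn⟩
      have n_nonpos : n ≤ 0 := by nlinarith
      have neg_two_lt : -2 < n := by nlinarith
      obtain rfl | rfl : n = 0 ∨ n = -1 := by omega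
      all_goals omega
    · intro e
      exact ⟨0, by rw [e]; ring⟩
  have q2_iff : f.h1 + f.h2 ∣ 2 * f.q0 + f.q2 - -f.q2 % (f.h1 + f.h2) ↔
      f.h1 + f.h2 ∣ 2 * (f.q0 + f.q2) := by
    rw [Int.emod_def, ← sub_add, dvd_add_left (dvd_mul_right _ _)]
    ring_nf
  obtain ⟨l, hl⟩ : 2 ∣ f.h0 + f.h2 := by omega
  have l_eq : (f.h0 + f.h2) / 2 = l := by omega
  rw [h.sigma_eq_iff hf hf.psi3 rfl rfl rfl]
  simp only [GMN.psi3]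
  rw [and_iff_right q0_iff, q1_iff, q2_iff, l_eq, add_comm f.h2, h1_eq, hl,
    two_mul_dvd_two_mul_add_iff (by omega) (by omega)]

theorem hEquiv_sigma_iff (h : IsLevel f) (hf : Admissible f) :
    HEquiv f (GMN.sigma f) ↔ ¬ Exceptional f := by
  have hc := hf.condsI_V
  obtain ⟨h1_eq, lt_q0, q0_lt⟩ := id h
  have swap_eq_self (e : GMN.sigma f = GMN.psi3 (swap f)) : swap f = f := by
    have := condsI_V_iff.1 hc
    have e0 : -f.q2 % (f.h2 + f.h1) + f.q0 = f.h0 + f.h2 :=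
      ((h.sigma_eq_iff hc hf.swap.condsI_V.psi3 h.h1_eq h.h1_eq.symm rfl).1 e).1
    have dvd : f.h2 + f.h1 ∣ -f.q2 - (f.h0 + f.h2 - f.q0) :=
      (eq_emod_iff_dvd (by omega) (by omega) _).1 (by omega)
    have : f.q2 = f.q0 := by
      rw [h1_eq, add_comm f.h2, sub_sub_eq_add_sub, dvd_sub_self_right] at dvd
      have := Int.eq_zero_of_abs_lt_dvd dvd (abs_lt.2 ⟨by omega, by omega⟩)
      omega
    exact Tuple.ext h1_eq h1_eq.symm rfl this rfl this.symm
  have hEquiv_iff : HEquiv f (GMN.sigma f) ↔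
      GMN.sigma f = f ∨ GMN.sigma f = GMN.psi3 f ∨ GMN.sigma f = swap f := by
    constructor
    · intro hs
      rcases hs.eq_of_isLevel hc h1_eq.ge (h1_eq.trans_le (lt_q0.trans q0_lt).le)
        (h.sigma hc) with e | e | e | e
      · exact .inl e
      · exact .inr (.inl e)
      · exact .inr (.inr e)
      · rw [swap_eq_self e] at e
        exact .inr (.inl e)
    · rintro (e | e | e) <;> rw [e]
      exacts [.refl _, hEquiv_psi3 hf, hEquiv_swap hf]
  rw [hEquiv_iff, h.sigma_eq_self_iff hc, h.sigma_eq_swap_iff hc, h.sigma_eq_psi3_iff hc]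
  rw [Exceptional, eq_comm (b := f.h1)]
  tauto

end IsLevel

/-! ### Ascending paths and roots -/

theorem GEquiv.trans {f g k : Tuple} (h : GEquiv f g) (h' : GEquiv g k) : GEquiv f k :=
  Relation.EqvGen.trans _ _ _ h h'

theorem gEquiv_sigma {f : Tuple} (hf : Admissible f) (hs : Admissible (sigma f)) :
    GEquiv f (sigma f) := .rel _ _ ⟨hf, hs, .inr (.inr (.inr rfl))⟩

/-- `x` is reached from `f` by elements of `H` and applications of `σ` that raise the
complexity. -/
inductive Ascends (f : Tuple) : Tuple → Prop
  | base {x : Tuple} (h : HEquiv f x) : Ascends f x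
  | up {z x : Tuple} (hz : Ascends f z) (az : Admissible z) (as : Admissible (sigma z))
      (hn : nu z < nu (sigma z)) (h : HEquiv (sigma z) x) : Ascends f x

namespace Ascends

variable {f x y : Tuple}

theorem of_hEquiv (h : Ascends f x) (hxy : HEquiv x y) : Ascends f y := by
  cases h with
  | base h => exact .base (h.trans hxy)
  | up hz az as hn h => exact .up hz az as hn (h.trans hxy)

theorem hEquiv_or_nu_lt (h : Ascends f x) : HEquiv f x ∨ nu f < nu x := by
  induction h with
  | base h => exact .inl h
  | up _ _ _ hn h ih =>
    right
    rw [h.nu_eq]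
    rcases ih with ih | ih
    · rwa [← ih.nu_eq]
    · exact ih.trans hn

theorem sigma (hmin : ∀ g, GEquiv f g → nu f ≤ nu g)
    (hlevel : ∀ x, HEquiv f x → nu (GMN.sigma x) = nu x → HEquiv f (GMN.sigma x))
    (h : Ascends f x) (hx : Admissible x) (hs : Admissible (GMN.sigma x)) :
    Ascends f (GMN.sigma x) := by
  have up (hn : nu x < nu (GMN.sigma x)) : Ascends f (GMN.sigma x) := .up h hx hs hn (.refl _)
  cases id h with
  | base h =>
    rcases lt_trichotomy (nu (GMN.sigma x)) (nu x) with hn | hn | hn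
    · have := hmin _ (h.gEquiv.trans (gEquiv_sigma hx hs))
      rw [← h.nu_eq] at this
      exact absurd hn this.not_gt
    · exact .base (hlevel x h hn)
    · exact up hn
  | @up z _ hz az as hn h' =>
    have sigma_back := sigma_sigma az.condsI_V
    obtain ⟨lt0, lt2⟩ := h1_lt_of_nu_sigma_lt as.condsI_V (by rwa [sigma_back])
    have off_axis (hx1 : x.h0 < x.h1 ∨ x.h2 < x.h1) : Ascends f (GMN.sigma x) := by
      rcases sigma_eq_or_nu_lt hx.condsI_V hx1 with e | hn
      · rwa [e]
      · exact up hn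
    rcases h'.isReflection_rotation as.condsI_V with r | r | r
    · have r' := r.sigma as.condsI_V
      rw [sigma_back] at r'
      exact hz.of_hEquiv (r'.hEquiv az)
    · exact off_axis (r.h0_lt_or_h2_lt (.inl lt2))
    · exact off_axis (r.h0_lt_or_h2_lt (.inr lt0))

theorem of_gEquiv (hmin : ∀ g, GEquiv f g → nu f ≤ nu g)
    (hlevel : ∀ x, HEquiv f x → nu (GMN.sigma x) = nu x → HEquiv f (GMN.sigma x))
    (h : GEquiv x y) : Ascends f x ↔ Ascends f y := by
  induction h with
  | rel a b h =>
    have of_H (h : HEquiv a b) : Ascends f a ↔ Ascends f b :=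
      ⟨fun ha => ha.of_hEquiv h, fun hb => hb.of_hEquiv h.symm⟩
    obtain ⟨ha, hb, rfl | rfl | rfl | rfl⟩ := h
    · exact of_H (hEquiv_psi1 ha)
    · exact of_H (hEquiv_psi2 ha)
    · exact of_H (hEquiv_psi3 ha)
    · have sigma_back := sigma_sigma ha.condsI_V
      refine ⟨fun h => h.sigma hmin hlevel ha hb, fun h => ?_⟩
      rw [← sigma_back]
      exact h.sigma hmin hlevel hb (by rwa [sigma_back])
  | refl _ => rfl
  | symm _ _ _ ih => exact ih.symm
  | trans _ _ _ _ _ ih ih' => exact ih.trans ih'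

end Ascends

theorem IsLevel.nu_sigma {f : Tuple} (h : IsLevel f) (hf : CondsI_V f) :
    nu (GMN.sigma f) = nu f := by
  rw [nu, nu, h.h0_sigma hf, h.h1_sigma hf, h.h2_sigma hf, h.h1_eq]

theorem hEquiv_sigma_of_nu_eq {f x : Tuple} (hf : Admissible f)
    (hlevel : ∀ y, HEquiv f y → IsLevel y → HEquiv f (sigma y)) (h : HEquiv f x)
    (hn : nu (sigma x) = nu x) : HEquiv f (sigma x) := by
  have hx := h.admissible hf
  rcases sigma_eq_or_isLevel hx.condsI_V hn with e | l | l
  · rwa [e]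
  · exact hlevel x h l
  · have h' : HEquiv f (psi2 (sigma x)) := by
      rw [← sigma_psi2 hx.condsI_V]
      exact hlevel _ (h.trans (hEquiv_psi2 hx)) l
    exact h'.trans (hEquiv_psi2 (h'.admissible hf))

theorem Minimal.root_iff {f : Tuple} (hmin : Minimal f) :
    Root f ↔ ∀ x, HEquiv f x → IsLevel x → HEquiv f (sigma x) := by
  have hf : Admissible f := hmin.1.1
  constructor
  · intro hroot x h hx
    have ha := h.admissible hf
    by_contra hs
    have lt := hroot.2 _ (h.gEquiv.trans (gEquiv_sigma ha (ha.sigma_of_isLevel hx))) hs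
    rw [hx.nu_sigma ha.condsI_V, h.nu_eq] at lt
    exact lt.false
  · intro hlevel
    refine ⟨hmin.1, fun g hg hH => ?_⟩
    have ascends : Ascends f g := (Ascends.of_gEquiv hmin.2
      (fun x => hEquiv_sigma_of_nu_eq hf hlevel) hg).1 (.base (.refl _))
    exact ascends.hEquiv_or_nu_lt.resolve_left hH

theorem Exceptional.isLevel {f : Tuple} (h : Exceptional f) : IsLevel f :=
  ⟨h.1.symm, h.2.1, h.2.2.1⟩

theorem forall_isLevel_hEquiv_sigma_iff {f : Tuple} (hf : Admissible f) (h01 : f.h0 ≤ f.h1)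
    (h12 : f.h1 ≤ f.h2) : (∀ x, HEquiv f x → IsLevel x → HEquiv f (sigma x)) ↔
      ¬ Exceptional (swap f) ∧ ¬ Exceptional f := by
  constructor
  · intro hlevel
    refine ⟨fun he => ?_, fun he => ?_⟩
    · have h := hlevel _ (hEquiv_swap hf) he.isLevel
      exact (he.isLevel.hEquiv_sigma_iff hf.swap).1 ((hEquiv_swap hf).symm.trans h) he
    · exact (he.isLevel.hEquiv_sigma_iff hf).1 (hlevel f (.refl _) he.isLevel) he
  · rintro ⟨hswap, hself⟩ x h hx
    have move {y : Tuple} (hy : Admissible y) (he : ¬ Exceptional y) (hfy : HEquiv f y)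
        (e : x = y ∨ x = psi3 y) : HEquiv f (sigma x) := by
      have hyl : IsLevel y := by
        rcases e with rfl | rfl
        · exact hx
        · exact psi3_psi3 hy.condsI_V ▸ hx.psi3 hy.condsI_V.psi3
      have hs := hfy.trans ((hyl.hEquiv_sigma_iff hy).2 he)
      rcases e with rfl | rfl
      · exact hs
      · rw [sigma_psi3 hy.condsI_V]
        exact hs.trans (hEquiv_psi3 (hs.admissible hf))
    rcases h.eq_of_isLevel hf.condsI_V h01 h12 hx with e | e | e | e
    · exact move hf hself (.refl _) (.inl e)
    · exact move hf hself (.refl _) (.inr e)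
    · exact move hf.swap hswap (hEquiv_swap hf) (.inl e)
    · exact move hf.swap hswap (hEquiv_swap hf) (.inr e)

/-- a minimal canonical 6-tuple is a root iff neither of the two
exceptional cases a), b) of Theorem 13 holds. -/
theorem stmt_19 (f : Tuple) (hmin : Minimal f) :
    Root f ↔
      (¬ (f.h0 = f.h1 ∧ f.h0 < f.q2 ∧ f.q2 < f.h2 ∧
            f.q2 ≠ (-f.q0) % (f.h2 + f.h0) ∧ 2 * f.q2 ≠ f.h0 + f.h2 ∧
            (f.q1 = 0 → f.q2 ≠ ((f.h0 + f.h2) / 2 - f.q0) % (f.h1 + f.h2))) ∧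
       ¬ (f.h0 = f.h1 ∧ f.h0 < f.q0 ∧ f.q0 < f.h2 ∧
            f.q0 ≠ (-f.q2) % (f.h1 + f.h2) ∧ 2 * f.q0 ≠ f.h0 + f.h2 ∧
            (f.q1 = 0 → f.q0 ≠ ((f.h0 + f.h2) / 2 - f.q2) % (f.h2 + f.h0)))) := by
  rw [hmin.root_iff, forall_isLevel_hEquiv_sigma_iff hmin.1.1 hmin.1.2.1.1 hmin.1.2.1.2,
    exceptional_swap_iff]
  rfl

end GMN
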